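/- For every β ∈ ℤ₊ⁿ and every flag Φ (weakly increasing with Φ_n = n), either the set 𝒲(β, Φ) is empty, or there exist β̂ ∈ ℤ₊ⁿ with the same decreasing rearrangement as β (β† = β̂†) and a bijection ζ : 𝒲(β, Φ) → 𝒲(β̂, Φ₀), where Φ₀ = (1, 2, …, n) is the standard flag, such that every word u ∈ 𝒲(β, Φ) is Knuth equivalent to ζ(u). -/

import Mathlib

/-!
Common combinatorial framework for flagged refined stable Grothendieck polynomials
of skew shapes: skew shapes, semistandard set-valued tableaux, the signature-rule
crystal operators, reading words, Knuth equivalence, the Burge correspondence and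
the Chan–Pflueger skew set-valued row insertion (as interfaces), Demazure crystals
and key polynomials.
-/

open Classical

attribute [local instance 2000] Classical.propDecidable

noncomputable section

namespace SkewG

/-! ### Cells and shapes -/

/-- A cell `(i, j)`: row `i`, column `j` (both 0-indexed). -/
abbrev Cell : Type := ℕ × ℕ

/-- A finite set of cells is the Young diagram of a partition iff it is a lower set. -/
def IsPartitionShape (s : Finset Cell) : Prop :=
  ∀ i j i' j', (i, j) ∈ s → i' ≤ i → j' ≤ j → (i', j') ∈ s

/-- The shape has at most `n` parts (rows `0, …, n-1`). -/
def AtMostRows (s : Finset Cell) (n : ℕ) : Prop := ∀ c ∈ s, c.1 < n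

/-- Two cells share a side. -/
def Adj (c d : Cell) : Prop :=
  (c.1 = d.1 ∧ (c.2 = d.2 + 1 ∨ d.2 = c.2 + 1)) ∨
  (c.2 = d.2 ∧ (c.1 = d.1 + 1 ∨ d.1 = c.1 + 1))

/-- Any two boxes of `s` are linked by a path inside `s`. -/
def ConnectedShape (s : Finset Cell) : Prop :=
  ∀ c ∈ s, ∀ d ∈ s,
    Relation.ReflTransGen (fun a b => a ∈ s ∧ b ∈ s ∧ Adj a b) c d

/-- `s` is a skew shape `λ/μ`. -/
def IsSkewShape (s : Finset Cell) : Prop :=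
  ∃ lam mu : Finset Cell, IsPartitionShape lam ∧ IsPartitionShape mu ∧
    mu ⊆ lam ∧ s = lam \ mu

/-! ### Tableaux -/

/-- A semistandard set-valued tableau on the cell set `s`, with entries in `{1, …, n}`:
nonempty sets on `s`, empty outside, rows weakly increasing, columns strictly increasing. -/
def IsSVTOn (n : ℕ) (s : Finset Cell) (T : Cell → Finset ℕ) : Prop :=
  (∀ c ∈ s, (T c).Nonempty) ∧
  (∀ c, c ∉ s → T c = ∅) ∧
  (∀ c, ∀ x ∈ T c, 1 ≤ x ∧ x ≤ n) ∧
  (∀ i j, (i, j) ∈ s → (i, j + 1) ∈ s →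
    ∀ x ∈ T (i, j), ∀ y ∈ T (i, j + 1), x ≤ y) ∧
  (∀ i j, (i, j) ∈ s → (i + 1, j) ∈ s →
    ∀ x ∈ T (i, j), ∀ y ∈ T (i + 1, j), x < y)

/-- An ordinary (single-valued) semistandard Young tableau on `s`; `0` outside `s`. -/
def IsSSYTOn (s : Finset Cell) (T : Cell → ℕ) : Prop :=
  (∀ c ∈ s, 1 ≤ T c) ∧
  (∀ c, c ∉ s → T c = 0) ∧
  (∀ i j, (i, j) ∈ s → (i, j + 1) ∈ s → T (i, j) ≤ T (i, j + 1)) ∧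
  (∀ i j, (i, j) ∈ s → (i + 1, j) ∈ s → T (i, j) < T (i + 1, j))

/-- A reverse row-strict tableau: rows strictly decreasing, columns weakly decreasing. -/
def IsRevRowStrictOn (s : Finset Cell) (T : Cell → ℕ) : Prop :=
  (∀ c ∈ s, 1 ≤ T c) ∧
  (∀ c, c ∉ s → T c = 0) ∧
  (∀ i j, (i, j) ∈ s → (i, j + 1) ∈ s → T (i, j + 1) < T (i, j)) ∧
  (∀ i j, (i, j) ∈ s → (i + 1, j) ∈ s → T (i + 1, j) ≤ T (i, j))

/-- Row bounded: entries in (0-indexed) row `i` — i.e. row `i+1` — are `< i+1`. -/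
def IsRowBounded (s : Finset Cell) (T : Cell → ℕ) : Prop :=
  ∀ c ∈ s, T c ≤ c.1

/-- Row weakly bounded: entries in row `i+1` (1-indexed) are `≤ i+1`. -/
def IsRowWeaklyBounded (s : Finset Cell) (T : Cell → ℕ) : Prop :=
  ∀ c ∈ s, T c ≤ c.1 + 1

/-- Number of occurrences of the letter `v` in a set-valued tableau. -/
def wtOn (s : Finset Cell) (T : Cell → Finset ℕ) (v : ℕ) : ℕ :=
  ∑ c ∈ s, if v ∈ T c then 1 else 0

/-- Number of occurrences of the letter `v` in a single-valued tableau. -/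
def wtS (s : Finset Cell) (T : Cell → ℕ) (v : ℕ) : ℕ :=
  ∑ c ∈ s, if T c = v then 1 else 0

/-- Excess in (0-indexed) row `i`: number of entries minus number of boxes. -/
def exRow (s : Finset Cell) (T : Cell → Finset ℕ) (i : ℕ) : ℕ :=
  (∑ c ∈ s.filter (fun c => c.1 = i), (T c).card) - (s.filter (fun c => c.1 = i)).card

/-- Total excess `|ex(T)|`. -/
def exTotal (s : Finset Cell) (T : Cell → Finset ℕ) : ℕ :=
  (∑ c ∈ s, (T c).card) - s.card

/-- A flag (0-indexed): weakly increasing on rows `0, …, n-1`, positive, with `Φ (n-1) = n`. -/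
def IsFlag (n : ℕ) (Φ : ℕ → ℕ) : Prop :=
  (∀ i j, i ≤ j → j < n → Φ i ≤ Φ j) ∧ (∀ i, i < n → 1 ≤ Φ i) ∧ Φ (n - 1) = n

/-- A set-valued tableau respects the flag `Φ`: entries of row `i` are at most `Φ i`. -/
def RespectsFlag (Φ : ℕ → ℕ) (T : Cell → Finset ℕ) : Prop :=
  ∀ i j, ∀ x ∈ T (i, j), x ≤ Φ i

/-- A single-valued tableau on `s` respects the flag `Φ`. -/
def RespectsFlagS (s : Finset Cell) (Φ : ℕ → ℕ) (T : Cell → ℕ) : Prop :=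
  ∀ c ∈ s, T c ≤ Φ c.1

/-- View a single-valued tableau as a set-valued one. -/
def svtOf (T : Cell → ℕ) : Cell → Finset ℕ := fun c => if T c = 0 then ∅ else {T c}

/-! ### The signature-rule crystal operators on set-valued fillings -/

def colHas (T : Cell → Finset ℕ) (v j : ℕ) : Prop := ∃ i, v ∈ T (i, j)

/-- Column `j` gets a `+` for the letter `v`: it contains `v` but not `v+1`. -/
def IsPlusCol (T : Cell → Finset ℕ) (v j : ℕ) : Prop := colHas T v j ∧ ¬ colHas T (v + 1) j

/-- Column `j` gets a `-` for the letter `v`: it contains `v+1` but not `v`. -/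
def IsMinusCol (T : Cell → Finset ℕ) (v j : ℕ) : Prop := colHas T (v + 1) j ∧ ¬ colHas T v j

def plusCount (T : Cell → Finset ℕ) (v a b : ℕ) : ℕ :=
  ((Finset.Ico a b).filter (fun j => IsPlusCol T v j)).card

def minusCount (T : Cell → Finset ℕ) (v a b : ℕ) : ℕ :=
  ((Finset.Ico a b).filter (fun j => IsMinusCol T v j)).card

/-- The `+` above column `j` survives the successive cancellation of `(-,+)` pairs. -/
def UnmatchedPlus (T : Cell → Finset ℕ) (v j : ℕ) : Prop :=
  IsPlusCol T v j ∧ minusCount T v 0 j < plusCount T v 0 (j + 1)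

/-- The `-` above column `j` survives the successive cancellation of `(-,+)` pairs. -/
def UnmatchedMinus (T : Cell → Finset ℕ) (v j : ℕ) : Prop :=
  IsMinusCol T v j ∧ ∀ b, plusCount T v (j + 1) b ≤ minusCount T v (j + 1) b

/-- The lowering operator `f_v` on raw set-valued fillings (`none` encodes `0`). -/
def fFill (v : ℕ) (T : Cell → Finset ℕ) : Option (Cell → Finset ℕ) :=
  if h : ∃ j, UnmatchedPlus T v j then
    letI j := sSup {j | UnmatchedPlus T v j}
    if hr : ∃ i, v ∈ T (i, j) then
      letI r := Classical.choose hr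
      if v ∈ T (r, j + 1) then
        some (fun c =>
          if c = (r, j + 1) then (T c).erase v
          else if c = (r, j) then insert (v + 1) (T c)
          else T c)
      else
        some (fun c => if c = (r, j) then insert (v + 1) ((T c).erase v) else T c)
    else none
  else none

/-- The raising operator `e_v` on raw set-valued fillings (`none` encodes `0`). -/
def eFill (v : ℕ) (T : Cell → Finset ℕ) : Option (Cell → Finset ℕ) :=
  if h : ∃ j, UnmatchedMinus T v j then
    letI j := sInf {j | UnmatchedMinus T v j}
    if hr : ∃ i, (v + 1) ∈ T (i, j) then
      letI r := Classical.choose hr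
      if 1 ≤ j ∧ (v + 1) ∈ T (r, j - 1) then
        some (fun c =>
          if c = (r, j - 1) then (T c).erase (v + 1)
          else if c = (r, j) then insert v (T c)
          else T c)
      else
        some (fun c => if c = (r, j) then insert v ((T c).erase (v + 1)) else T c)
    else none
  else none

def fIter (v : ℕ) : ℕ → (Cell → Finset ℕ) → Option (Cell → Finset ℕ)
  | 0, T => some T
  | k + 1, T => (fIter v k T).bind (fFill v)

def eIter (v : ℕ) : ℕ → (Cell → Finset ℕ) → Option (Cell → Finset ℕ)
  | 0, T => some T
  | k + 1, T => (eIter v k T).bind (eFill v)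

/-- `φ_v(T) = max {k | f_v^k T ≠ 0}`. -/
def phiOp (v : ℕ) (T : Cell → Finset ℕ) : ℕ := sSup {k | (fIter v k T).isSome}

/-- `ε_v(T) = max {k | e_v^k T ≠ 0}`. -/
def epsOp (v : ℕ) (T : Cell → Finset ℕ) : ℕ := sSup {k | (eIter v k T).isSome}

/-- A highest weight element: killed by all raising operators. -/
def HighestWeight (n : ℕ) (T : Cell → Finset ℕ) : Prop :=
  ∀ v, 1 ≤ v → v + 1 ≤ n → eFill v T = none

/-- One step of the crystal graph (in either direction). -/
def CrystRel (n : ℕ) (T U : Cell → Finset ℕ) : Prop :=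
  ∃ v, 1 ≤ v ∧ v + 1 ≤ n ∧ (fFill v T = some U ∨ fFill v U = some T)

/-- The connected component of `S'` inside a subset `X` of a crystal. -/
def ComponentOf (n : ℕ) (X : Set (Cell → Finset ℕ)) (S' : Cell → Finset ℕ) :
    Set (Cell → Finset ℕ) :=
  {T | T ∈ X ∧ Relation.ReflTransGen (fun a b => a ∈ X ∧ b ∈ X ∧ CrystRel n a b) S' T}

/-! ### Words -/

/-- Columns of row `i` of `s`, listed from left to right. -/
def rowList (s : Finset Cell) (i : ℕ) : List ℕ :=
  (List.range (s.sup Prod.snd + 1)).filter (fun j => decide ((i, j) ∈ s))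

def rowLenOf (s : Finset Cell) (i : ℕ) : ℕ := (rowList s i).length

def rowWordOn (s : Finset Cell) (T : Cell → ℕ) (i : ℕ) : List ℕ :=
  (rowList s i).map (fun j => T (i, j))

/-- The row reading word: rows bottom to top, each row left to right. -/
def readingWordOn (s : Finset Cell) (T : Cell → ℕ) : List ℕ :=
  ((List.range (s.sup Prod.fst + 1)).reverse.map (rowWordOn s T)).flatten

/-- The word `b(s)`: `(row length of row i)` copies of the letter `i+1`,
rows listed from the bottom up. -/
def bwordOn (s : Finset Cell) : List ℕ :=
  ((List.range (s.sup Prod.fst + 1)).reverse.map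
    (fun i => List.replicate (rowList s i).length (i + 1))).flatten

/-- The word `b(α)` of a composition: `α i` copies of the letter `i+1`, decreasing letters. -/
def bwordComp (n : ℕ) (α : ℕ → ℕ) : List ℕ :=
  ((List.range n).reverse.map (fun i => List.replicate (α i) (i + 1))).flatten

/-- Elementary Knuth moves. -/
inductive KnuthStep : List ℕ → List ℕ → Prop
  | kxzy (u w : List ℕ) (x y z : ℕ) (h1 : x ≤ y) (h2 : y < z) :
      KnuthStep (u ++ x :: z :: y :: w) (u ++ z :: x :: y :: w)
  | kyxz (u w : List ℕ) (x y z : ℕ) (h1 : x < y) (h2 : y ≤ z) :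
      KnuthStep (u ++ y :: x :: z :: w) (u ++ y :: z :: x :: w)

/-- Knuth (plactic) equivalence of words. -/
def KnuthEquiv : List ℕ → List ℕ → Prop := Relation.EqvGen KnuthStep

/-- Yamanouchi word: in every suffix, `v+1` occurs at least as often as `v+2`. -/
def IsYamanouchi (w : List ℕ) : Prop :=
  ∀ k v, (w.drop k).count (v + 2) ≤ (w.drop k).count (v + 1)

/-- The biword conditions (columns listed left to right with weakly decreasing top row,
strictly decreasing the top whenever the bottom strictly decreases). -/
def IsBiword (top bot : List ℕ) : Prop :=
  top.length = bot.length ∧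
  (∀ x ∈ top, 1 ≤ x) ∧ (∀ x ∈ bot, 1 ≤ x) ∧
  ∀ p, p + 1 < top.length →
    top.getD (p + 1) 0 ≤ top.getD p 0 ∧
    (bot.getD (p + 1) 0 < bot.getD p 0 → top.getD (p + 1) 0 < top.getD p 0)

/-! ### Sorting, Demazure crystals -/

/-- The `i`-th largest value (0-indexed) among `α 0, …, α (n-1)`: the decreasing
rearrangement `α†`. -/
def dsort (n : ℕ) (α : ℕ → ℕ) (i : ℕ) : ℕ :=
  sSup {m | i < ((Finset.range n).filter (fun k => m ≤ α k)).card}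

/-- The Young diagram of a weakly decreasing function. -/
def diagOf (n : ℕ) (f : ℕ → ℕ) : Finset Cell :=
  (Finset.product (Finset.range n) (Finset.range (f 0))).filter (fun c => c.2 < f c.1)

/-- product of simple transpositions `s_{i} = (i, i+1)` (0-indexed coordinates). -/
def permOfWord (is : List ℕ) : Equiv.Perm ℕ :=
  (is.map (fun i => Equiv.swap i (i + 1))).prod

def IsReducedWord (τ : Equiv.Perm ℕ) (is : List ℕ) : Prop :=
  permOfWord is = τ ∧ ∀ js : List ℕ, permOfWord js = τ → is.length ≤ js.length

/-- `τ • α` with `(τ • α) (τ i) = α i`. -/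
def permuteComp (τ : Equiv.Perm ℕ) (f : ℕ → ℕ) : ℕ → ℕ := fun i => f (τ.symm i)

/-- The unique SSYT of partition shape `sh` whose weight equals its shape
(`i+1`'s in row `i`). -/
def highestTabOf (sh : Finset Cell) : Cell → ℕ := fun c => if c ∈ sh then c.1 + 1 else 0

/-- Apply `f_{i₁}^{k₁} ∘ ⋯ ∘ f_{i_p}^{k_p}` (rightmost factor first); the letters of the
first list are crystal indices. -/
def applyF : List ℕ → List ℕ → (Cell → Finset ℕ) → Option (Cell → Finset ℕ)
  | [], _, T => some T
  | _ :: _, [], T => some T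
  | i :: is, k :: ks, T => (applyF is ks T).bind (fIter i k)

/-- The Demazure crystal `B_w(sh)` (as a set of set-valued fillings all of whose
values are singletons), for a given word for `w`; the word is a list of crystal
indices `i` (acting on the letters `i, i+1`). -/
def DemazureSet (sh : Finset Cell) (word : List ℕ) : Set (Cell → Finset ℕ) :=
  {T | ∃ ks : List ℕ, ks.length = word.length ∧
        applyF word ks (svtOf (highestTabOf sh)) = some T}

/-! ### Key polynomials via Demazure operators -/

/-- `T_i` applied to a monomial `x^a` (the exact quotient
`(x_i x^a - x_{i+1} s_i x^a)/(x_i - x_{i+1})`), written as an explicit sum. -/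
def demMono (n : ℕ) (i : ℕ) (h : i + 1 < n) (a : Fin n →₀ ℕ) : MvPolynomial (Fin n) ℤ :=
  letI i0 : Fin n := ⟨i, Nat.lt_of_succ_lt h⟩
  letI i1 : Fin n := ⟨i + 1, h⟩
  letI p := a i0
  letI q := a i1
  if q ≤ p then
    ∑ m ∈ Finset.Icc q p,
      MvPolynomial.monomial ((a.update i0 m).update i1 (p + q - m)) (1 : ℤ)
  else
    - ∑ m ∈ Finset.Ico (p + 1) q,
      MvPolynomial.monomial ((a.update i0 m).update i1 (p + q - m)) (1 : ℤ)

/-- The Demazure operator `T_i` (0-indexed: acts on the variables `x_i, x_{i+1}`). -/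
def demOp (n : ℕ) (i : ℕ) (f : MvPolynomial (Fin n) ℤ) : MvPolynomial (Fin n) ℤ :=
  if h : i + 1 < n then
    ∑ a ∈ f.support, MvPolynomial.C (MvPolynomial.coeff a f) * demMono n i h a
  else f

/-- `T_w` along a word (leftmost letter applied last). -/
def demWord (n : ℕ) : List ℕ → MvPolynomial (Fin n) ℤ → MvPolynomial (Fin n) ℤ
  | [], f => f
  | i :: is, f => demOp n i (demWord n is f)

/-- The monomial `x^α` (coordinate `i` of `Fin n` carries `α i`). -/
def xMono (n : ℕ) (α : ℕ → ℕ) : MvPolynomial (Fin n) ℤ :=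
  ∏ i : Fin n, MvPolynomial.X i ^ α (i : ℕ)

/-- The key polynomial `κ_α = T_w x^{α†}` for (any) reduced word of a permutation `w`
with `w • α† = α`. -/
def keyPoly (n : ℕ) (α : ℕ → ℕ) : MvPolynomial (Fin n) ℤ :=
  if h : ∃ is : List ℕ, IsReducedWord (permOfWord is) is ∧
      (∀ i, i < n → permuteComp (permOfWord is) (dsort n α) i = α i)
  then demWord n h.choose (xMono n (dsort n α))
  else 0

/-! ### Generating polynomials -/

abbrev XPoly (n : ℕ) := MvPolynomial (Fin n) ℤ
abbrev XTPoly (n : ℕ) := MvPolynomial (Fin n) (MvPolynomial (Fin n) ℤ)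

/-- Embed an `x`-polynomial into the ring `ℤ[t][x]`. -/
def liftX (n : ℕ) (f : XPoly n) : XTPoly n :=
  MvPolynomial.map (MvPolynomial.C : ℤ →+* MvPolynomial (Fin n) ℤ) f

/-- The monomial `t^α` inside `ℤ[t][x]` (as a constant in the `x`-variables). -/
def tMono (n : ℕ) (α : ℕ → ℕ) : XTPoly n :=
  MvPolynomial.C (∏ i : Fin n, MvPolynomial.X i ^ α (i : ℕ))

/-- The monomial `x^{wt T}` for a set-valued tableau, inside `ℤ[t][x]`. -/
def xWt (n : ℕ) (s : Finset Cell) (T : Cell → Finset ℕ) : XTPoly n :=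
  ∏ i : Fin n, MvPolynomial.X i ^ wtOn s T ((i : ℕ) + 1)

/-- extend a `Fin n`-indexed composition by zero. -/
def extendf (n : ℕ) (α : Fin n → ℕ) : ℕ → ℕ :=
  fun r => if h : r < n then α ⟨r, h⟩ else 0

/-- The flagged refined skew stable Grothendieck polynomial
`G_{λ/μ}(X_Φ; t) = Σ_T (-1)^{|ex T|} t^{ex T} x^{wt T}`. -/
def Gflagged (n : ℕ) (s : Finset Cell) (Φ : ℕ → ℕ) : XTPoly n :=
  ∑ᶠ T : {T : Cell → Finset ℕ // IsSVTOn n s T ∧ RespectsFlag Φ T},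
    ((-1 : XTPoly n) ^ exTotal s T.1) * tMono n (exRow s T.1) * xWt n s T.1

/-- The flagged skew Schur polynomial `s_{λ/μ}(X_Φ)`. -/
def sFlagged (n : ℕ) (s : Finset Cell) (Φ : ℕ → ℕ) : XPoly n :=
  ∑ᶠ U : {U : Cell → ℕ // IsSSYTOn s U ∧ (∀ c ∈ s, U c ≤ n) ∧ RespectsFlagS s Φ U},
    ∏ i : Fin n, MvPolynomial.X i ^ wtS s U.1 ((i : ℕ) + 1)

/-- The Schur polynomial `s_ν(x_1, …, x_n)` of a partition shape. -/
def schurOf (n : ℕ) (sh : Finset Cell) : XPoly n :=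
  ∑ᶠ U : {U : Cell → ℕ // IsSSYTOn sh U ∧ ∀ c ∈ sh, U c ≤ n},
    ∏ i : Fin n, MvPolynomial.X i ^ wtS sh U.1 ((i : ℕ) + 1)

/-- The stable Grothendieck polynomial `G_ν(x_1,…,x_n) = RG_ν(x; 1)`. -/
def RGone (n : ℕ) (sh : Finset Cell) : XPoly n :=
  ∑ᶠ T : {T : Cell → Finset ℕ // IsSVTOn n sh T},
    ((-1 : XPoly n) ^ exTotal sh T.1) *
      ∏ i : Fin n, MvPolynomial.X i ^ wtOn sh T.1 ((i : ℕ) + 1)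

/-! ### Reverse plane partitions -/

/-- A reverse plane partition on `s` (weakly increasing rows and columns, `0` outside). -/
def IsRPPOn (s : Finset Cell) (R : Cell → ℕ) : Prop :=
  (∀ c ∈ s, 1 ≤ R c) ∧ (∀ c, c ∉ s → R c = 0) ∧
  (∀ i j, (i, j) ∈ s → (i, j + 1) ∈ s → R (i, j) ≤ R (i, j + 1)) ∧
  (∀ i j, (i, j) ∈ s → (i + 1, j) ∈ s → R (i, j) ≤ R (i + 1, j))

/-- `wt(R) v` = number of columns of `R` containing `v`. -/
def wtRPP (s : Finset Cell) (R : Cell → ℕ) (v : ℕ) : ℕ :=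
  ((Finset.range (s.sup Prod.snd + 1)).filter
    (fun j => ∃ i, (i, j) ∈ s ∧ R (i, j) = v)).card

/-- `ceq(R) i` = number of boxes of row `i` whose entry equals the entry just below. -/
def ceqOn (s : Finset Cell) (R : Cell → ℕ) (i : ℕ) : ℕ :=
  (s.filter (fun c => c.1 = i ∧ (c.1 + 1, c.2) ∈ s ∧ R c = R (c.1 + 1, c.2))).card

/-- The dual stable Grothendieck polynomial `g_ν(x_1,…,x_n)`. -/
def gDual (n : ℕ) (sh : Finset Cell) : XPoly n :=
  ∑ᶠ R : {R : Cell → ℕ // IsRPPOn sh R ∧ ∀ c ∈ sh, R c ≤ n},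
    ∏ i : Fin n, MvPolynomial.X i ^ wtRPP sh R.1 ((i : ℕ) + 1)

/-- The flagged refined dual stable Grothendieck polynomial
`g_{λ/μ}(X_Φ; t) = Σ_R t^{ceq R} x^{wt R}`. -/
def gFlagged (n : ℕ) (s : Finset Cell) (Φ : ℕ → ℕ) : XTPoly n :=
  ∑ᶠ R : {R : Cell → ℕ // IsRPPOn s R ∧ RespectsFlagS s Φ R},
    tMono n (ceqOn s R.1) * ∏ i : Fin n, MvPolynomial.X i ^ wtRPP s R.1 ((i : ℕ) + 1)

/-- A cell is circled in an RPP: topmost occurrence of its letter in its column. -/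
def rppCircled (s : Finset Cell) (R : Cell → ℕ) (c : Cell) : Prop :=
  c ∈ s ∧ (c.1 = 0 ∨ (c.1 - 1, c.2) ∉ s ∨ R (c.1 - 1, c.2) ≠ R c)

/-- The reading word `w(R)` of an RPP: circled entries, bottom row up, left to right. -/
def rppReadingWord (s : Finset Cell) (R : Cell → ℕ) : List ℕ :=
  ((List.range (s.sup Prod.fst + 1)).reverse.map (fun i =>
    ((rowList s i).filter (fun j => decide (rppCircled s R (i, j)))).map
      (fun j => R (i, j)))).flatten

/-- The row reading word `r_T` of an RPP: omit entries equal to the entry just below,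
read rows bottom to top, left to right. -/
def rppRowWord (s : Finset Cell) (R : Cell → ℕ) : List ℕ :=
  ((List.range (s.sup Prod.fst + 1)).reverse.map (fun i =>
    ((rowList s i).filter (fun j => decide ((i + 1, j) ∉ s ∨ R (i + 1, j) ≠ R (i, j)))).map
      (fun j => R (i, j)))).flatten

/-- The height word `h(T)`: the (1-indexed) row numbers of the letters of `r_T`. -/
def rppHeights (s : Finset Cell) (R : Cell → ℕ) : List ℕ :=
  ((List.range (s.sup Prod.fst + 1)).reverse.map (fun i =>
    ((rowList s i).filter (fun j => decide ((i + 1, j) ∉ s ∨ R (i + 1, j) ≠ R (i, j)))).map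
      (fun _ => i + 1))).flatten

/-- minimum entry of a box. -/
def boxMin (A : Finset ℕ) : ℕ := sInf (A : Set ℕ)

/-- non-minimal entries of a box, largest first. -/
def boxExtras (A : Finset ℕ) : List ℕ :=
  ((List.range (A.sup id + 1)).filter (fun x => decide (x ∈ A ∧ x ≠ boxMin A))).reverse

/-- The reading word `w(S)` of a set-valued tableau: rows bottom to top; in each row
first the non-minimal entries, boxes right to left (largest to smallest within a box),
then the minimal entries, boxes left to right. -/
def svtReadingWord (s : Finset Cell) (T : Cell → Finset ℕ) : List ℕ :=
  ((List.range (s.sup Prod.fst + 1)).reverse.map (fun i =>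
    (((rowList s i).reverse.map (fun j => boxExtras (T (i, j)))).flatten) ++
      ((rowList s i).map (fun j => boxMin (T (i, j)))))).flatten

/-! ### The `*`-composition of shapes and tableaux -/

def minRowOf (s : Finset Cell) : ℕ := sInf (Prod.fst '' (s : Set Cell))
def minColOf (s : Finset Cell) : ℕ := sInf (Prod.snd '' (s : Set Cell))

def rowSpan (s : Finset Cell) : ℕ := if s = ∅ then 0 else s.sup Prod.fst + 1 - minRowOf s
def colSpan (s : Finset Cell) : ℕ := if s = ∅ then 0 else s.sup Prod.snd + 1 - minColOf s

def rowOffset (shapes : List (Finset Cell)) (i : ℕ) : ℕ := ((shapes.take i).map rowSpan).sum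
def colOffset (shapes : List (Finset Cell)) (i : ℕ) : ℕ :=
  ((shapes.drop (i + 1)).map colSpan).sum

def embedCell (shapes : List (Finset Cell)) (i : ℕ) (c : Cell) : Cell :=
  (rowOffset shapes i + (c.1 - minRowOf (shapes.getD i ∅)),
   colOffset shapes i + (c.2 - minColOf (shapes.getD i ∅)))

def unembedCell (shapes : List (Finset Cell)) (i : ℕ) (c : Cell) : Cell :=
  (c.1 - rowOffset shapes i + minRowOf (shapes.getD i ∅),
   c.2 - colOffset shapes i + minColOf (shapes.getD i ∅))

/-- `θ_k * ⋯ * θ_1` (the list is ordered from the top component down). -/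
def compositeShape (shapes : List (Finset Cell)) : Finset Cell :=
  (Finset.range shapes.length).biUnion (fun i => (shapes.getD i ∅).image (embedCell shapes i))

/-- `T_k * ⋯ * T_1`. -/
def compositeTab (shapes : List (Finset Cell)) (Ts : List (Cell → ℕ)) : Cell → ℕ :=
  fun c => ∑ i ∈ Finset.range shapes.length,
    if unembedCell shapes i c ∈ shapes.getD i ∅ ∧
        embedCell shapes i (unembedCell shapes i c) = c
    then Ts.getD i (fun _ => 0) (unembedCell shapes i c) else 0

/-- `φ_1 * ⋯ * φ_k`: concatenation of flags along the row blocks of the components. -/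
def compositeFlag (shapes : List (Finset Cell)) (flags : List (ℕ → ℕ)) : ℕ → ℕ :=
  fun r => ∑ i ∈ Finset.range shapes.length,
    if rowOffset shapes i ≤ r ∧ r < rowOffset shapes i + rowSpan (shapes.getD i ∅)
    then flags.getD i (fun _ => 0) (r - rowOffset shapes i) else 0

/-- `comps` is the list of connected components of `s`, from the top down. -/
def IsComponents (s : Finset Cell) (comps : List (Finset Cell)) : Prop :=
  (∀ c, c ∈ s ↔ ∃ i < comps.length, c ∈ comps.getD i ∅) ∧
  (∀ i, i < comps.length → (comps.getD i ∅).Nonempty) ∧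
  (∀ i, i < comps.length → ConnectedShape (comps.getD i ∅)) ∧
  (∀ i j, i < j → j < comps.length →
    ∀ c ∈ comps.getD i ∅, ∀ d ∈ comps.getD j ∅, c.1 < d.1) ∧
  (∀ i j, i < comps.length → j < comps.length → i ≠ j →
    ∀ c ∈ comps.getD i ∅, ∀ d ∈ comps.getD j ∅, ¬ Adj c d)

/-- Restrict a filling to a sub-shape. -/
def restrict (u : Finset Cell) (T : Cell → Finset ℕ) : Cell → Finset ℕ :=
  fun c => if c ∈ u then T c else ∅

/-! ### The Burge correspondence (interface) -/

structure BurgeOut where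
  sh : Finset Cell
  P : Cell → ℕ
  Q : Cell → ℕ

/-- The Burge correspondence: a bijection between biwords and pairs of semistandard
Young tableaux of the same partition shape, the insertion tableau `P` being Knuth
equivalent to the bottom word and the recording tableau `Q` having the content of the
top word. -/
structure BurgeData where
  out : List ℕ → List ℕ → BurgeOut
  shape_part : ∀ top bot, IsBiword top bot → IsPartitionShape (out top bot).sh
  ssytP : ∀ top bot, IsBiword top bot → IsSSYTOn (out top bot).sh (out top bot).P
  ssytQ : ∀ top bot, IsBiword top bot → IsSSYTOn (out top bot).sh (out top bot).Q
  knuthP : ∀ top bot, IsBiword top bot →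
    KnuthEquiv (readingWordOn (out top bot).sh (out top bot).P) bot
  contentP : ∀ top bot, IsBiword top bot →
    ∀ v, wtS (out top bot).sh (out top bot).P v = bot.count v
  contentQ : ∀ top bot, IsBiword top bot →
    ∀ v, wtS (out top bot).sh (out top bot).Q v = top.count v
  inj : ∀ top bot top' bot', IsBiword top bot → IsBiword top' bot' →
    out top bot = out top' bot' → top = top' ∧ bot = bot'
  surj : ∀ (sh : Finset Cell) (P Q : Cell → ℕ), IsPartitionShape sh →
    IsSSYTOn sh P → IsSSYTOn sh Q →
    ∃ top bot, IsBiword top bot ∧ out top bot = ⟨sh, P, Q⟩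

/-! ### The Chan–Pflueger skew set-valued row insertion (interface) -/

structure CPOut where
  sTil : Finset Cell
  Q : Cell → ℕ
  Til : Cell → ℕ

/-- The conditions satisfied by the output `(θ̃, Q'', T̃)` of the Chan–Pflueger
insertion applied to a set-valued tableau of connected skew shape `s` with excess `e`. -/
def CPTarget (n : ℕ) (s : Finset Cell) (e : ℕ → ℕ) (o : CPOut) : Prop :=
  s ⊆ o.sTil ∧ IsSkewShape o.sTil ∧ ConnectedShape o.sTil ∧
  (∀ c ∈ o.sTil, ∃ r, (r, c.2) ∈ s) ∧
  (∀ c ∈ o.sTil, c ∉ s → ∃ r, r < c.1 ∧ (r, c.2) ∈ s) ∧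
  IsRevRowStrictOn (o.sTil \ s) o.Q ∧ IsRowBounded (o.sTil \ s) o.Q ∧
  (∀ r, wtS (o.sTil \ s) o.Q (r + 1) = e r) ∧
  IsSSYTOn o.sTil o.Til ∧ (∀ c ∈ o.sTil, o.Til c ≤ n)

/-- Interface for the Chan–Pflueger skew set-valued row insertion (Algorithm 3.12 of
Chan–Pflueger): for each set-valued tableau `T` of connected skew shape `s` it
produces the final output `out s T = (θ̃, Q'', T̃)` together with the full sequence of
intermediate set-valued tableaux `steps s T`, each step adding one box. -/
structure CPData (n : ℕ) where
  out : Finset Cell → (Cell → Finset ℕ) → CPOut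
  steps : Finset Cell → (Cell → Finset ℕ) → List (Finset Cell × (Cell → Finset ℕ))
  valid : ∀ s T, IsSkewShape s → ConnectedShape s → IsSVTOn n s T →
    CPTarget n s (exRow s T) (out s T) ∧
    (∀ v, wtS (out s T).sTil (out s T).Til v = wtOn s T v)
  steps_first : ∀ s T, IsSkewShape s → ConnectedShape s → IsSVTOn n s T →
    (steps s T).head? = some (s, T)
  steps_last : ∀ s T, IsSkewShape s → ConnectedShape s → IsSVTOn n s T →
    (steps s T).getLast? = some ((out s T).sTil, svtOf (out s T).Til)
  steps_svt : ∀ s T, IsSkewShape s → ConnectedShape s → IsSVTOn n s T →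
    ∀ p ∈ steps s T, IsSVTOn n p.1 p.2
  steps_len : ∀ s T, IsSkewShape s → ConnectedShape s → IsSVTOn n s T →
    (steps s T).length = exTotal s T + 1
  steps_add : ∀ s T, IsSkewShape s → ConnectedShape s → IsSVTOn n s T →
    ∀ j, j + 1 < (steps s T).length →
      ((steps s T).getD j (∅, fun _ => ∅)).1 ⊆ ((steps s T).getD (j + 1) (∅, fun _ => ∅)).1 ∧
      (((steps s T).getD (j + 1) (∅, fun _ => ∅)).1 \
        ((steps s T).getD j (∅, fun _ => ∅)).1).card = 1
  bij : ∀ s, IsSkewShape s → ConnectedShape s → ∀ (e : ℕ → ℕ) (o : CPOut),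
    CPTarget n s e o →
    ∃! T : {T : Cell → Finset ℕ // IsSVTOn n s T ∧ ∀ r, exRow s T r = e r}, out s T.1 = o

/-- The rows (0-indexed) of the boxes added at the successive steps of the insertion. -/
def addedRows (n : ℕ) (cp : CPData n) (s : Finset Cell) (T : Cell → Finset ℕ) : List ℕ :=
  (List.range ((cp.steps s T).length - 1)).map (fun j =>
    ((((cp.steps s T).getD (j + 1) (∅, fun _ => ∅)).1 \
      (((cp.steps s T).getD j (∅, fun _ => ∅)).1)).sup Prod.fst))

/-- The sequence of flags `Φ^{(j)}`: when a box is added in (0-indexed) row `r`, the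
flag value of row `r` is replaced by the flag value of row `r - 1`. -/
def flagSeq (Φ : ℕ → ℕ) (ks : List ℕ) : ℕ → (ℕ → ℕ)
  | 0 => Φ
  | j + 1 => fun r => if r = ks.getD j 0 then flagSeq Φ ks j (r - 1) else flagSeq Φ ks j r

/-- The flag `Φ̃` induced by the insertion of `T`. -/
def inducedFlag (n : ℕ) (cp : CPData n) (s : Finset Cell) (T : Cell → Finset ℕ)
    (Φ : ℕ → ℕ) : ℕ → ℕ :=
  flagSeq Φ (addedRows n cp s T) (addedRows n cp s T).length

/-! ### Compatible tableaux for SVT -/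

def compTilShapes (n : ℕ) (cp : CPData n) (comps : List (Finset Cell))
    (T : Cell → Finset ℕ) : List (Finset Cell) :=
  comps.map (fun θ => (cp.out θ (restrict θ T)).sTil)

def compTilQs (n : ℕ) (cp : CPData n) (comps : List (Finset Cell))
    (T : Cell → Finset ℕ) : List (Cell → ℕ) :=
  comps.map (fun θ => (cp.out θ (restrict θ T)).Q)

def compTilTabs (n : ℕ) (cp : CPData n) (comps : List (Finset Cell))
    (T : Cell → Finset ℕ) : List (Cell → ℕ) :=
  comps.map (fun θ => (cp.out θ (restrict θ T)).Til)

/-- The composite shape `σ = σ_k * ⋯ * σ_1` of the insertion outputs. -/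
def insShape (n : ℕ) (cp : CPData n) (comps : List (Finset Cell))
    (T : Cell → Finset ℕ) : Finset Cell :=
  compositeShape (compTilShapes n cp comps T)

/-- The composite tableau `T̃ = T̃_k * ⋯ * T̃_1` of the insertion outputs. -/
def insTab (n : ℕ) (cp : CPData n) (comps : List (Finset Cell))
    (T : Cell → Finset ℕ) : Cell → ℕ :=
  compositeTab (compTilShapes n cp comps T) (compTilTabs n cp comps T)

/-- The restriction of a global flag to the row block of the `i`-th component. -/
def componentFlag (comps : List (Finset Cell)) (Φ : ℕ → ℕ) (i : ℕ) : ℕ → ℕ :=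
  fun r => Φ (rowOffset comps i + (r - minRowOf (comps.getD i ∅)))

/-- The composite induced flag `Φ̃ = Φ̃_1 * ⋯ * Φ̃_k`. -/
def insFlag (n : ℕ) (cp : CPData n) (comps : List (Finset Cell))
    (T : Cell → Finset ℕ) (Φ : ℕ → ℕ) : ℕ → ℕ :=
  compositeFlag (compTilShapes n cp comps T)
    ((List.range comps.length).map (fun i => fun p =>
      inducedFlag n cp (comps.getD i ∅) (restrict (comps.getD i ∅) T)
        (componentFlag comps Φ i) (minRowOf (comps.getD i ∅) + p)))

/-- The Burge correspondence applied to `⌊b(σ); r_{T̃}⌋`. -/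
def insBurge (n : ℕ) (B : BurgeData) (cp : CPData n) (comps : List (Finset Cell))
    (T : Cell → Finset ℕ) : BurgeOut :=
  B.out (bwordOn (insShape n cp comps T))
    (readingWordOn (insShape n cp comps T) (insTab n cp comps T))

/-- `p = (sh, rect(P̃), R)` arises from a highest weight element `P` of
`SVT(λ/μ, Φ)` of excess `e`; `R = p.Q` is then a `(λ/μ, Φ)`-compatible tableau
for SVT with `ex(R) = e`. -/
def IsCompatibleSVT (n : ℕ) (B : BurgeData) (cp : CPData n) (s : Finset Cell)
    (comps : List (Finset Cell)) (Φ : ℕ → ℕ) (e : ℕ → ℕ) (p : BurgeOut) : Prop :=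
  ∃ P : Cell → Finset ℕ, IsSVTOn n s P ∧ RespectsFlag Φ P ∧ HighestWeight n P ∧
    (∀ r, exRow s P r = e r) ∧ insBurge n B cp comps P = p

/-- Compatible of arbitrary excess. -/
def IsCompatibleSVT' (n : ℕ) (B : BurgeData) (cp : CPData n) (s : Finset Cell)
    (comps : List (Finset Cell)) (Φ : ℕ → ℕ) (p : BurgeOut) : Prop :=
  ∃ P : Cell → Finset ℕ, IsSVTOn n s P ∧ RespectsFlag Φ P ∧ HighestWeight n P ∧
    insBurge n B cp comps P = p

/-- The set `SVT_e(θ, Φ; θ̃, Q'')`. -/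
def PieceSet (n : ℕ) (cp : CPData n) (s : Finset Cell) (comps : List (Finset Cell))
    (Φ e : ℕ → ℕ) (tilShapes : List (Finset Cell)) (Qs : List (Cell → ℕ)) :
    Set (Cell → Finset ℕ) :=
  {T | IsSVTOn n s T ∧ RespectsFlag Φ T ∧ (∀ r, exRow s T r = e r) ∧
       compTilShapes n cp comps T = tilShapes ∧ compTilQs n cp comps T = Qs}

/-- The set `A(R, ν, Ψ)` of flagged tableaux of shape `ν` whose Burge pair is
`(rect(T), R)`. -/
def ASet (n : ℕ) (B : BurgeData) (sTil : Finset Cell) (Ψflag : ℕ → ℕ) (R : BurgeOut) :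
    Set (Cell → ℕ) :=
  {U | IsSSYTOn sTil U ∧ (∀ c ∈ sTil, U c ≤ n) ∧ RespectsFlagS sTil Ψflag U ∧
       (B.out (bwordOn sTil) (readingWordOn sTil U)).sh = R.sh ∧
       (B.out (bwordOn sTil) (readingWordOn sTil U)).Q = R.Q}

/-! ### Left keys and the Reiner–Shimozono flag compression (interfaces) -/

def colSetOf (sh : Finset Cell) (K : Cell → ℕ) (j : ℕ) : Set ℕ :=
  {v | ∃ i, (i, j) ∈ sh ∧ K (i, j) = v}

/-- A key tableau: the entries of each column contain those of the next column. -/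
def IsKeyTab (sh : Finset Cell) (K : Cell → ℕ) : Prop :=
  IsSSYTOn sh K ∧ ∀ j, colSetOf sh K (j + 1) ⊆ colSetOf sh K j

/-- Interface providing the left key `K₋(R)` of a semistandard Young tableau. -/
structure LeftKeyData where
  lk : Finset Cell → (Cell → ℕ) → (Cell → ℕ)
  key : ∀ sh R, IsPartitionShape sh → IsSSYTOn sh R → IsKeyTab sh (lk sh R)
  knuth : ∀ sh R, IsPartitionShape sh → IsSSYTOn sh R →
    ∀ v, wtS sh (lk sh R) v ≤ wtS sh R v + wtS sh R v + 1  -- (weakly specified)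

/-- `β(R)`: the weight of the left key of the recording tableau `R = p.Q`. -/
def betaOf (L : LeftKeyData) (p : BurgeOut) : ℕ → ℕ :=
  fun r => wtS p.sh (L.lk p.sh p.Q) (r + 1)

/-- concatenation of the factors `v^{(n)} ⋯ v^{(1)}` (factor `n-1` first, 0-indexed). -/
def wordOfFactors (n : ℕ) (v : ℕ → List ℕ) : List ℕ :=
  ((List.range n).reverse.map v).flatten

/-- The set `𝒲(α, Φ)` of Reiner–Shimozono: words `v = v^{(n)} ⋯ v^{(1)}` into maximal
row words of lengths `α_i`, letters of `v^{(i)}` at most `Φ_i`, whose Burge recording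
tableau for the biword `⌊b(α); v⌋` is `key(α)` (the unique SSYT of shape `α†` and
weight `α`). -/
def WSet (n : ℕ) (B : BurgeData) (α : ℕ → ℕ) (Φ : ℕ → ℕ) : Set (ℕ → List ℕ) :=
  {v | (∀ i, n ≤ i → v i = []) ∧
       (∀ i, (v i).length = α i) ∧
       (∀ i, (v i).Chain' (· ≤ ·)) ∧
       (∀ i, ∀ x ∈ v i, 1 ≤ x ∧ x ≤ Φ i) ∧
       (∀ i i', i' < i → v i ≠ [] → v i' ≠ [] →
          (∀ m, i' < m → m < i → v m = []) → (v i').headI < (v i).getLastD 0) ∧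
       (∀ r, rowLenOf (B.out (bwordComp n α) (wordOfFactors n v)).sh r = dsort n α r) ∧
       (∀ u, wtS (B.out (bwordComp n α) (wordOfFactors n v)).sh
               (B.out (bwordComp n α) (wordOfFactors n v)).Q u =
             if 1 ≤ u ∧ u ≤ n then α (u - 1) else 0)}

/-- Interface for the Reiner–Shimozono flag compression `β ↦ β̂` (relative to a flag):
`β̂† = β†` and there is a Knuth-equivalence-preserving bijection
`ζ : 𝒲(β, Φ) → 𝒲(β̂, Φ₀)`. -/
structure RSHatData (n : ℕ) (B : BurgeData) where
  hat : (ℕ → ℕ) → (ℕ → ℕ) → (ℕ → ℕ)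
  sorted : ∀ α Φ, IsFlag n Φ → ∀ i, dsort n (hat α Φ) i = dsort n α i
  zeta : ∀ α Φ, IsFlag n Φ → (WSet n B α Φ).Nonempty →
    ∃ ζ : (ℕ → List ℕ) → (ℕ → List ℕ),
      Set.BijOn ζ (WSet n B α Φ) (WSet n B (hat α Φ) (fun i => i + 1)) ∧
      ∀ v ∈ WSet n B α Φ, KnuthEquiv (wordOfFactors n v) (wordOfFactors n (ζ v))

/-! ### Compatible tableaux for RPP -/

/-- `(q, T')` witnesses that `q.Q` is a `(λ/μ, Φ)`-compatible tableau for RPP: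
`T'` is the unique flagged RPP of shape `s` with Yamanouchi row reading word whose
Burge recording tableau (for the biword `⌊h(T'); r_{T'}⌋`) is `q.Q`; and
`ceq(q.Q) := ceq(T')`. -/
def IsCompatibleRPP (n : ℕ) (B : BurgeData) (s : Finset Cell) (Φ : ℕ → ℕ)
    (q : BurgeOut) (T' : Cell → ℕ) : Prop :=
  (IsRPPOn s T' ∧ RespectsFlagS s Φ T' ∧ IsYamanouchi (rppRowWord s T') ∧
    B.out (rppHeights s T') (rppRowWord s T') = q) ∧
  (∀ T'' : Cell → ℕ,
    (IsRPPOn s T'' ∧ RespectsFlagS s Φ T'' ∧ IsYamanouchi (rppRowWord s T'') ∧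
      (B.out (rppHeights s T'') (rppRowWord s T'')).Q = q.Q) → T'' = T')


section FlagCompression
attribute [-instance] Classical.propDecidable
attribute [local instance 5] Classical.propDecidable

/-- compatibility of a coloured word. -/
def ColR (S : Finset ℕ) (a b : ℕ × ℕ) : Prop := a.2 ∈ S → a.2 = b.2 → a.1 ≤ b.1

/-- `w` has `S.card` disjoint weakly increasing subsequences of total size at least `m`. -/
def Inc (S : Finset ℕ) (m : ℕ) (w : List ℕ) : Prop :=
  ∃ L : List (ℕ × ℕ), L.map Prod.fst = w ∧ L.Pairwise (ColR S) ∧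
    m ≤ L.countP (fun a => decide (a.2 ∈ S))

def swc (c d : ℕ) (a : ℕ × ℕ) : ℕ × ℕ := (a.1, if a.2 = c then d else if a.2 = d then c else a.2)

theorem swc_fst (c d : ℕ) (L : List (ℕ × ℕ)) : (L.map (swc c d)).map Prod.fst = L.map Prod.fst := by
  simp [swc, Function.comp_def]

theorem swc_count (S : Finset ℕ) (c d : ℕ) (hc : c ∈ S) (hd : d ∈ S) (L : List (ℕ × ℕ)) :
    (L.map (swc c d)).countP (fun a => decide (a.2 ∈ S)) =
      L.countP (fun a => decide (a.2 ∈ S)) := by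
  rw [List.countP_map]
  apply List.countP_congr
  intro a _
  simp only [swc, Function.comp, decide_eq_true_eq]
  grind

theorem swc_pairwise (S : Finset ℕ) (c d : ℕ) (hc : c ∈ S) (hd : d ∈ S) (L : List (ℕ × ℕ))
    (h : L.Pairwise (ColR S)) : (L.map (swc c d)).Pairwise (ColR S) := by
  rw [List.pairwise_map]
  refine h.imp ?_
  intro a b hab
  simp only [ColR, swc] at *
  grind

theorem inc_step_aux {S : Finset ℕ} {m : ℕ} {p q : List ℕ} (h : KnuthStep p q) :
    Inc S m p ↔ Inc S m q := by
  cases h with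
  | kxzy u w x y z h1 h2 =>
    constructor
    · rintro ⟨L, hm, hp, hc⟩
      rw [List.map_eq_append_iff] at hm
      obtain ⟨Lu, L1, rfl, rfl, hm⟩ := hm
      rw [List.map_eq_cons_iff] at hm
      obtain ⟨⟨x', cx⟩, L2, rfl, rfl, hm⟩ := hm
      rw [List.map_eq_cons_iff] at hm
      obtain ⟨⟨z', cz⟩, L3, rfl, rfl, hm⟩ := hm
      rw [List.map_eq_cons_iff] at hm
      obtain ⟨⟨y', cy⟩, Lw, rfl, rfl, rfl⟩ := hm
      simp only [List.pairwise_append, List.pairwise_cons, List.mem_cons, forall_eq_or_imp] at hp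
      simp only at h1 h2
      obtain ⟨hpu, ⟨⟨hxz, hxy, hxw⟩, ⟨hzy, hzw⟩, hyw, hpw⟩, hu⟩ := hp
      simp only [List.countP_append, List.countP_cons, decide_eq_true_eq] at hc
      by_cases hcc : cx = cz ∧ cx ∈ S
      · obtain ⟨rfl, hcS⟩ := hcc
        have hne : cy ≠ cx := by
          rintro rfl
          have := hzy hcS rfl
          simp only at this; omega
        by_cases hd : cy ∈ S
        · refine ⟨Lu ++ (z', cy) :: (x', cx) :: (y', cx) :: Lw.map (swc cx cy), ?_, ?_, ?_⟩
          · simp [swc, Function.comp_def]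
          · simp only [List.pairwise_append, List.pairwise_cons, List.mem_cons, forall_eq_or_imp,
              List.mem_map, forall_exists_index, and_imp, forall_apply_eq_imp_iff₂]
            have := swc_pairwise S cx cy hcS hd Lw hpw
            refine ⟨hpu, ⟨⟨?_, ?_, ?_⟩, ⟨?_, ?_⟩, ?_, this⟩, ?_⟩
            all_goals simp only [ColR, swc] at *
            all_goals grind
          · simp only [List.countP_append, List.countP_cons, decide_eq_true_eq,
              swc_count S cx cy hcS hd]
            simp only [hcS, hd] at *
            omega
        · refine ⟨Lu ++ (z', cy) :: (x', cx) :: (y', cx) :: Lw, ?_, ?_, ?_⟩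
          · simp
          · simp only [List.pairwise_append, List.pairwise_cons, List.mem_cons, forall_eq_or_imp]
            refine ⟨hpu, ⟨⟨?_, ?_, ?_⟩, ⟨?_, ?_⟩, ?_, hpw⟩, ?_⟩
            all_goals simp only [ColR] at *
            all_goals grind
          · simp only [List.countP_append, List.countP_cons, decide_eq_true_eq]
            simp only [hcS, hd] at *
            omega
      · refine ⟨Lu ++ (z', cz) :: (x', cx) :: (y', cy) :: Lw, ?_, ?_, ?_⟩
        · simp
        · simp only [List.pairwise_append, List.pairwise_cons, List.mem_cons, forall_eq_or_imp]
          refine ⟨hpu, ⟨⟨?_, ?_, ?_⟩, ⟨?_, ?_⟩, ?_, hpw⟩, ?_⟩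
          all_goals simp only [ColR] at *
          all_goals grind
        · simp only [List.countP_append, List.countP_cons, decide_eq_true_eq]
          omega
    · rintro ⟨L, hm, hp, hc⟩
      rw [List.map_eq_append_iff] at hm
      obtain ⟨Lu, L1, rfl, rfl, hm⟩ := hm
      rw [List.map_eq_cons_iff] at hm
      obtain ⟨⟨z', cz⟩, L2, rfl, rfl, hm⟩ := hm
      rw [List.map_eq_cons_iff] at hm
      obtain ⟨⟨x', cx⟩, L3, rfl, rfl, hm⟩ := hm
      rw [List.map_eq_cons_iff] at hm
      obtain ⟨⟨y', cy⟩, Lw, rfl, rfl, rfl⟩ := hm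
      simp only [List.pairwise_append, List.pairwise_cons, List.mem_cons, forall_eq_or_imp] at hp
      simp only at h1 h2
      obtain ⟨hpu, ⟨⟨hxz, hxy, hxw⟩, ⟨hzy, hzw⟩, hyw, hpw⟩, hu⟩ := hp
      simp only [List.countP_append, List.countP_cons, decide_eq_true_eq] at hc
      refine ⟨Lu ++ (x', cx) :: (z', cz) :: (y', cy) :: Lw, ?_, ?_, ?_⟩
      · simp
      · simp only [List.pairwise_append, List.pairwise_cons, List.mem_cons, forall_eq_or_imp]
        refine ⟨hpu, ⟨⟨?_, ?_, ?_⟩, ⟨?_, ?_⟩, ?_, hpw⟩, ?_⟩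
        all_goals simp only [ColR] at *
        all_goals grind
      · simp only [List.countP_append, List.countP_cons, decide_eq_true_eq]
        omega
  | kyxz u w x y z h1 h2 =>
    constructor
    · rintro ⟨L, hm, hp, hc⟩
      rw [List.map_eq_append_iff] at hm
      obtain ⟨Lu, L1, rfl, rfl, hm⟩ := hm
      rw [List.map_eq_cons_iff] at hm
      obtain ⟨⟨y', cy⟩, L2, rfl, rfl, hm⟩ := hm
      rw [List.map_eq_cons_iff] at hm
      obtain ⟨⟨x', cx⟩, L3, rfl, rfl, hm⟩ := hm
      rw [List.map_eq_cons_iff] at hm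
      obtain ⟨⟨z', cz⟩, Lw, rfl, rfl, rfl⟩ := hm
      simp only [List.pairwise_append, List.pairwise_cons, List.mem_cons, forall_eq_or_imp] at hp
      simp only at h1 h2
      obtain ⟨hpu, ⟨⟨hyx, hyz, hyw⟩, ⟨hxz, hxw⟩, hzw, hpw⟩, hu⟩ := hp
      simp only [List.countP_append, List.countP_cons, decide_eq_true_eq] at hc
      by_cases hcc : cx = cz ∧ cx ∈ S
      · obtain ⟨rfl, hcS⟩ := hcc
        have hne : cy ≠ cx := by
          rintro rfl
          have := hyx hcS rfl
          simp only at this; omega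
        by_cases hd : cy ∈ S
        · refine ⟨Lu ++ (y', cy) :: (z', cy) :: (x', cx) :: Lw.map (swc cx cy), ?_, ?_, ?_⟩
          · simp [swc, Function.comp_def]
          · simp only [List.pairwise_append, List.pairwise_cons, List.mem_cons, forall_eq_or_imp,
              List.mem_map, forall_exists_index, and_imp, forall_apply_eq_imp_iff₂]
            have := swc_pairwise S cx cy hcS hd Lw hpw
            refine ⟨hpu, ⟨⟨?_, ?_, ?_⟩, ⟨?_, ?_⟩, ?_, this⟩, ?_⟩
            all_goals simp only [ColR, swc] at *
            all_goals grind
          · simp only [List.countP_append, List.countP_cons, decide_eq_true_eq,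
              swc_count S cx cy hcS hd]
            simp only [hcS, hd] at *
            omega
        · refine ⟨Lu ++ (y', cx) :: (z', cx) :: (x', cy) :: Lw, ?_, ?_, ?_⟩
          · simp
          · simp only [List.pairwise_append, List.pairwise_cons, List.mem_cons, forall_eq_or_imp]
            refine ⟨hpu, ⟨⟨?_, ?_, ?_⟩, ⟨?_, ?_⟩, ?_, hpw⟩, ?_⟩
            all_goals simp only [ColR] at *
            all_goals grind
          · simp only [List.countP_append, List.countP_cons, decide_eq_true_eq]
            simp only [hcS, hd] at *
            omega
      · refine ⟨Lu ++ (y', cy) :: (z', cz) :: (x', cx) :: Lw, ?_, ?_, ?_⟩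
        · simp
        · simp only [List.pairwise_append, List.pairwise_cons, List.mem_cons, forall_eq_or_imp]
          refine ⟨hpu, ⟨⟨?_, ?_, ?_⟩, ⟨?_, ?_⟩, ?_, hpw⟩, ?_⟩
          all_goals simp only [ColR] at *
          all_goals grind
        · simp only [List.countP_append, List.countP_cons, decide_eq_true_eq]
          omega
    · rintro ⟨L, hm, hp, hc⟩
      rw [List.map_eq_append_iff] at hm
      obtain ⟨Lu, L1, rfl, rfl, hm⟩ := hm
      rw [List.map_eq_cons_iff] at hm
      obtain ⟨⟨y', cy⟩, L2, rfl, rfl, hm⟩ := hm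
      rw [List.map_eq_cons_iff] at hm
      obtain ⟨⟨z', cz⟩, L3, rfl, rfl, hm⟩ := hm
      rw [List.map_eq_cons_iff] at hm
      obtain ⟨⟨x', cx⟩, Lw, rfl, rfl, rfl⟩ := hm
      simp only [List.pairwise_append, List.pairwise_cons, List.mem_cons, forall_eq_or_imp] at hp
      simp only at h1 h2
      obtain ⟨hpu, ⟨⟨hxz, hxy, hxw⟩, ⟨hzy, hzw⟩, hyw, hpw⟩, hu⟩ := hp
      simp only [List.countP_append, List.countP_cons, decide_eq_true_eq] at hc
      refine ⟨Lu ++ (y', cy) :: (x', cx) :: (z', cz) :: Lw, ?_, ?_, ?_⟩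
      · simp
      · simp only [List.pairwise_append, List.pairwise_cons, List.mem_cons, forall_eq_or_imp]
        refine ⟨hpu, ⟨⟨?_, ?_, ?_⟩, ⟨?_, ?_⟩, ?_, hpw⟩, ?_⟩
        all_goals simp only [ColR] at *
        all_goals grind
      · simp only [List.countP_append, List.countP_cons, decide_eq_true_eq]
        omega

theorem inc_knuth {S : Finset ℕ} {m : ℕ} {p q : List ℕ} (h : KnuthEquiv p q) :
    Inc S m p ↔ Inc S m q := by
  induction h with
  | rel x y h => exact inc_step_aux h
  | refl x => rfl
  | symm x y _ ih => exact ih.symm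
  | trans x y z _ _ h1 h2 => exact h1.trans h2

theorem mem_rowList (s : Finset Cell) (i j : ℕ) : j ∈ rowList s i ↔ (i, j) ∈ s := by
  unfold rowList
  simp only [List.mem_filter, List.mem_range, decide_eq_true_eq, and_iff_right_iff_imp]
  intro h
  have := Finset.le_sup (f := Prod.snd) h
  simp only at this
  omega

theorem rowList_sorted (s : Finset Cell) (i : ℕ) : (rowList s i).Pairwise (· < ·) := by
  unfold rowList
  exact List.Pairwise.filter _ List.pairwise_lt_range

theorem rowLenOf_card (s : Finset Cell) (i : ℕ) :
    rowLenOf s i = (s.filter (fun c => c.1 = i)).card := by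
  unfold rowLenOf
  have hnd : (rowList s i).Nodup := (rowList_sorted s i).imp (fun h => Nat.ne_of_lt h)
  rw [← List.toFinset_card_of_nodup hnd]
  apply Finset.card_bij (fun j _ => (i, j))
  · intro j hj
    simp only [List.mem_toFinset, mem_rowList] at hj
    simp [hj]
  · intro a _ b _ h
    simpa using h
  · rintro ⟨a, b⟩ h
    simp only [Finset.mem_filter] at h
    obtain ⟨h, rfl⟩ := h
    exact ⟨b, by simpa [mem_rowList] using h, rfl⟩

def cellsOf (s : Finset Cell) : List Cell :=
  ((List.range (s.sup Prod.fst + 1)).reverse.map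
    (fun i => (rowList s i).map (fun j => (i, j)))).flatten

theorem reading_cells (s : Finset Cell) (T : Cell → ℕ) :
    readingWordOn s T = (cellsOf s).map T := by
  unfold readingWordOn cellsOf rowWordOn
  rw [List.map_flatten, List.map_map]
  congr 1
  apply List.map_congr_left
  intro i _
  simp [Function.comp_def]

theorem mem_cellsOf (s : Finset Cell) (c : Cell) : c ∈ cellsOf s ↔ c ∈ s := by
  unfold cellsOf
  obtain ⟨i, j⟩ := c
  simp only [List.mem_flatten, List.mem_map, List.mem_reverse, List.mem_range]
  constructor
  · rintro ⟨l, ⟨i', hi', rfl⟩, h⟩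
    simp only [List.mem_map, mem_rowList, Prod.mk.injEq] at h
    obtain ⟨j', h, rfl, rfl⟩ := h
    exact h
  · intro h
    refine ⟨_, ⟨i, ?_, rfl⟩, ?_⟩
    · have := Finset.le_sup (f := Prod.fst) h
      simp only at this
      omega
    · simpa [mem_rowList] using h

def Bef (c d : Cell) : Prop := d.1 < c.1 ∨ (c.1 = d.1 ∧ c.2 < d.2)

theorem cellsOf_pairwise (s : Finset Cell) : (cellsOf s).Pairwise Bef := by
  unfold cellsOf
  rw [List.pairwise_flatten]
  constructor
  · intro l hl
    simp only [List.mem_map] at hl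
    obtain ⟨i, _, rfl⟩ := hl
    rw [List.pairwise_map]
    exact (rowList_sorted s i).imp (fun h => Or.inr ⟨rfl, h⟩)
  · rw [List.pairwise_map, List.pairwise_reverse]
    refine List.pairwise_lt_range.imp ?_
    intro a b hab x hx y hy
    simp only [List.mem_map] at hx hy
    obtain ⟨_, _, rfl⟩ := hx
    obtain ⟨_, _, rfl⟩ := hy
    exact Or.inl hab

theorem cellsOf_nodup (s : Finset Cell) : (cellsOf s).Nodup := by
  refine (cellsOf_pairwise s).imp ?_
  intro a b h hab
  subst hab
  unfold Bef at h
  omega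

theorem countP_cells (s : Finset Cell) (p : Cell → Prop) [DecidablePred p] :
    (cellsOf s).countP (fun c => decide (p c)) = (s.filter p).card := by
  rw [List.countP_eq_length_filter,
    ← List.toFinset_card_of_nodup ((cellsOf_nodup s).filter _)]
  congr 1
  ext c
  simp [mem_cellsOf]

theorem sum_rowLen (s : Finset Cell) (k : ℕ) :
    ∑ i ∈ Finset.range k, rowLenOf s i = (s.filter (fun c => c.1 < k)).card := by
  rw [Finset.card_eq_sum_card_fiberwise (f := Prod.fst) (t := Finset.range k)]
  · apply Finset.sum_congr rfl
    intro i hi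
    rw [rowLenOf_card]
    congr 1
    ext c
    simp only [Finset.mem_filter, Finset.mem_range] at *
    grind
  · intro c hc
    simp at hc
    simp [hc.2]

theorem row_mono {s : Finset Cell} {T : Cell → ℕ} (hs : IsPartitionShape s)
    (hT : IsSSYTOn s T) (i j d : ℕ) (h : (i, j + d) ∈ s) : T (i, j) ≤ T (i, j + d) := by
  induction d with
  | zero => simp
  | succ d ih =>
    have h1 : (i, j + d) ∈ s := hs _ _ _ _ h le_rfl (by omega)
    exact (ih h1).trans (hT.2.2.1 i (j + d) h1 h)

theorem col_mono {s : Finset Cell} {T : Cell → ℕ} (hs : IsPartitionShape s)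
    (hT : IsSSYTOn s T) (i j d : ℕ) (h : (i + d + 1, j) ∈ s) : T (i, j) < T (i + d + 1, j) := by
  induction d with
  | zero => exact hT.2.2.2 i j (hs _ _ _ _ h (by omega) le_rfl) h
  | succ d ih =>
    have h1 : (i + d + 1, j) ∈ s := hs _ _ _ _ h (by omega) le_rfl
    exact (ih h1).trans (hT.2.2.2 (i + d + 1) j h1 h)

theorem tab_inc {s : Finset Cell} {T : Cell → ℕ} (hs : IsPartitionShape s)
    (hT : IsSSYTOn s T) (k : ℕ) :
    Inc (Finset.range k) (∑ i ∈ Finset.range k, rowLenOf s i) (readingWordOn s T) := by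
  refine ⟨(cellsOf s).map (fun c => (T c, c.1)), ?_, ?_, ?_⟩
  · rw [reading_cells, List.map_map]; rfl
  · rw [List.pairwise_map]
    have h := (cellsOf_pairwise s)
    refine h.imp_of_mem ?_
    rintro ⟨a, b⟩ ⟨c, d⟩ ha hb hab
    rw [mem_cellsOf] at ha hb
    intro _ h2
    simp only at h2
    subst h2
    unfold Bef at hab
    simp only [lt_irrefl, true_and, false_or] at hab
    obtain ⟨e, rfl⟩ := Nat.exists_eq_add_of_lt hab
    exact row_mono hs hT a b (e + 1) hb
  · rw [sum_rowLen, List.countP_map]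
    have := countP_cells s (fun c => c.1 < k)
    rw [← this]
    apply le_of_eq
    apply List.countP_congr
    intro c _
    simp

theorem exists_color (C : List Cell) (hC : C.Nodup) (T : Cell → ℕ) (L : List (ℕ × ℕ))
    (h : L.map Prod.fst = C.map T) : ∃ f : Cell → ℕ, L = C.map (fun c => (T c, f c)) := by
  induction C generalizing L with
  | nil => simp at h; exact ⟨fun _ => 0, by simp [h]⟩
  | cons c C ih =>
    cases L with
    | nil => simp at h
    | cons a L =>
      simp only [List.map_cons, List.cons.injEq] at h
      rw [List.nodup_cons] at hC
      obtain ⟨f, hf⟩ := ih hC.2 L h.2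
      refine ⟨Function.update f c a.2, ?_⟩
      simp only [List.map_cons, Function.update_self, List.cons.injEq]
      refine ⟨?_, ?_⟩
      · rw [← h.1]
      · rw [hf]
        apply List.map_congr_left
        intro d hd
        have : d ≠ c := fun e => hC.1 (e ▸ hd)
        simp [Function.update_of_ne this]

theorem tab_inc_le {s : Finset Cell} {T : Cell → ℕ} (hs : IsPartitionShape s)
    (hT : IsSSYTOn s T) (S : Finset ℕ) (m : ℕ) (h : Inc S m (readingWordOn s T)) :
    m ≤ ∑ i ∈ Finset.range S.card, rowLenOf s i := by
  obtain ⟨L, hL, hp, hm⟩ := h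
  rw [reading_cells] at hL
  obtain ⟨f, rfl⟩ := exists_color _ (cellsOf_nodup s) T L hL
  refine hm.trans ?_
  rw [List.countP_map, sum_rowLen]
  have e := countP_cells s (fun c => f c ∈ S)
  have e2 : List.countP ((fun a : ℕ × ℕ => decide (a.2 ∈ S)) ∘ fun c => (T c, f c)) (cellsOf s)
      = (s.filter (fun c => f c ∈ S)).card := by
    rw [← e]; rfl
  rw [e2]
  rw [List.pairwise_map] at hp
  have hall : ∀ c ∈ s, ∀ d ∈ s, Bef c d → ColR S (T c, f c) (T d, f d) := by
    have hq := ((cellsOf_pairwise s).and hp).imp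
      (S := fun c d => (Bef c d → ColR S (T c, f c) (T d, f d)) ∧
        (Bef d c → ColR S (T d, f d) (T c, f c))) (by
        rintro a b ⟨h1, h2⟩
        refine ⟨fun _ => h2, fun h3 => ?_⟩
        unfold Bef at h1 h3
        omega)
    intro c hc d hd
    have : Std.Symm (fun c d => (Bef c d → ColR S (T c, f c) (T d, f d)) ∧
        (Bef d c → ColR S (T d, f d) (T c, f c))) := ⟨fun a b hab => ⟨hab.2, hab.1⟩⟩
    have hh := List.Pairwise.forall_of_forall (l := cellsOf s) (R := fun c d =>
      (Bef c d → ColR S (T c, f c) (T d, f d)) ∧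
        (Bef d c → ColR S (T d, f d) (T c, f c)))
      (fun a _ => by
        have : ¬ Bef a a := by unfold Bef; omega
        exact ⟨fun h => absurd h this, fun h => absurd h this⟩) hq
    exact (hh ((mem_cellsOf s c).2 hc) ((mem_cellsOf s d).2 hd)).1
  rw [Finset.card_eq_sum_card_fiberwise (s := s.filter (fun c => f c ∈ S)) (f := Prod.snd)
    (t := s.image Prod.snd), Finset.card_eq_sum_card_fiberwise
    (s := s.filter (fun c => c.1 < S.card)) (f := Prod.snd) (t := s.image Prod.snd)]
  · apply Finset.sum_le_sum
    intro j _
    by_cases hk : ∃ i, (i, j) ∈ s ∧ S.card ≤ i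
    · obtain ⟨i, hi, hki⟩ := hk
      have h1 : (((s.filter (fun c => f c ∈ S))).filter (fun c => c.2 = j)).card ≤ S.card := by
        apply Finset.card_le_card_of_injOn f
        · intro c hc
          simp at hc
          exact hc.1.2
        · rintro ⟨a, b⟩ ha ⟨a', b'⟩ ha' he
          simp only [Finset.coe_filter, Finset.mem_filter, Set.mem_ofPred_eq] at ha ha'
          obtain ⟨⟨ha, haS⟩, rfl⟩ := ha
          obtain ⟨⟨ha', haS'⟩, hbb⟩ := ha'
          try simp only at hbb
          subst hbb
          rcases lt_trichotomy a a' with hlt | rfl | hlt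
          · exfalso
            obtain ⟨d, rfl⟩ := Nat.exists_eq_add_of_lt hlt
            have := col_mono hs hT a b' d ha'
            have h3 := hall _ ha' _ ha (Or.inl hlt) haS' he.symm
            simp only at h3
            omega
          · rfl
          · exfalso
            obtain ⟨d, rfl⟩ := Nat.exists_eq_add_of_lt hlt
            have := col_mono hs hT a' b' d ha
            have h3 := hall _ ha _ ha' (Or.inl hlt) haS he
            simp only at h3
            omega
      refine h1.trans ?_
      have h2 : (Finset.range S.card).image (fun i => (i, j)) ⊆
          (s.filter (fun c => c.1 < S.card)).filter (fun c => c.2 = j) := by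
        intro c hc
        simp only [Finset.mem_image, Finset.mem_range] at hc
        obtain ⟨a, ha, rfl⟩ := hc
        simp only [Finset.mem_filter, and_true]
        exact ⟨hs _ _ _ _ hi (by omega) le_rfl, ha⟩
      have h4 := Finset.card_le_card h2
      rw [Finset.card_image_of_injective _ (fun a b h => by simpa using h)] at h4
      simpa using h4
    · push Not at hk
      apply Finset.card_le_card
      rintro ⟨a, b⟩ hc
      simp only [Finset.mem_filter] at hc ⊢
      obtain ⟨⟨h1, _⟩, rfl⟩ := hc
      exact ⟨⟨h1, hk a h1⟩, rfl⟩
  · intro c hc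
    simp only [Finset.coe_filter, Set.mem_ofPred_eq] at hc
    simp only [Finset.coe_image]
    exact ⟨c, hc.1, rfl⟩
  · intro c hc
    simp only [Finset.coe_filter, Set.mem_ofPred_eq] at hc
    simp only [Finset.coe_image]
    exact ⟨c, hc.1, rfl⟩

theorem knuthStep_ctx {p q : List ℕ} (a b : List ℕ) (h : KnuthStep p q) :
    KnuthStep (a ++ p ++ b) (a ++ q ++ b) := by
  cases h with
  | kxzy u w x y z h1 h2 =>
    have := KnuthStep.kxzy (a ++ u) (w ++ b) x y z h1 h2
    simpa [List.append_assoc] using this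
  | kyxz u w x y z h1 h2 =>
    have := KnuthStep.kyxz (a ++ u) (w ++ b) x y z h1 h2
    simpa [List.append_assoc] using this

theorem knuth_ctx {p q : List ℕ} (a b : List ℕ) (h : KnuthEquiv p q) :
    KnuthEquiv (a ++ p ++ b) (a ++ q ++ b) := by
  induction h with
  | rel x y h => exact Relation.EqvGen.rel _ _ (knuthStep_ctx a b h)
  | refl x => exact Relation.EqvGen.refl _
  | symm x y _ ih => exact Relation.EqvGen.symm _ _ ih
  | trans x y z _ _ h1 h2 => exact Relation.EqvGen.trans _ _ _ h1 h2

theorem knuth_left {p q : List ℕ} (a : List ℕ) (h : KnuthEquiv p q) :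
    KnuthEquiv (a ++ p) (a ++ q) := by
  simpa using knuth_ctx a [] h

theorem knuth_right {p q : List ℕ} (b : List ℕ) (h : KnuthEquiv p q) :
    KnuthEquiv (p ++ b) (q ++ b) := by
  simpa using knuth_ctx [] b h

theorem knuth_trans {p q r : List ℕ} (h : KnuthEquiv p q) (h' : KnuthEquiv q r) :
    KnuthEquiv p r := Relation.EqvGen.trans _ _ _ h h'

theorem knuth_symm {p q : List ℕ} (h : KnuthEquiv p q) : KnuthEquiv q p :=
  Relation.EqvGen.symm _ _ h

/-- row insertion `r ← x` bumps `y` and gives `r'`. -/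
def Bump (r : List ℕ) (x y : ℕ) (r' : List ℕ) : Prop :=
  ∃ A B : List ℕ, r = A ++ y :: B ∧ r' = A ++ x :: B ∧ A.Pairwise (· ≤ ·) ∧ B.Pairwise (· ≤ ·) ∧
    (∀ a ∈ A, a ≤ x) ∧ x < y ∧ (∀ b ∈ B, y ≤ b)

theorem knuth_move1 (B : List ℕ) (y x : ℕ) (hB : B.Pairwise (· ≤ ·)) (hxy : x < y)
    (hb : ∀ b ∈ B, y ≤ b) : KnuthEquiv (y :: B ++ [x]) (y :: x :: B) := by
  induction B generalizing y with
  | nil => exact Relation.EqvGen.refl _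
  | cons b B ih =>
    rw [List.pairwise_cons] at hB
    have hyb : y ≤ b := hb b (by simp)
    have h1 := ih b hB.2 (by omega) hB.1
    have h2 : KnuthEquiv (y :: b :: B ++ [x]) (y :: b :: x :: B) := by
      simpa using knuth_left [y] h1
    refine knuth_trans h2 ?_
    exact knuth_symm (Relation.EqvGen.rel _ _ (by
      simpa using KnuthStep.kyxz [] B x y b hxy hyb))

theorem knuth_move2 (A : List ℕ) (y x : ℕ) (B : List ℕ) (hA : A.Pairwise (· ≤ ·)) (hxy : x < y)
    (ha : ∀ a ∈ A, a ≤ x) : KnuthEquiv (A ++ y :: x :: B) (y :: A ++ x :: B) := by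
  induction A with
  | nil => exact Relation.EqvGen.refl _
  | cons a A ih =>
    rw [List.pairwise_cons] at hA
    have h1 := ih hA.2 (fun c hc => ha c (by simp [hc]))
    have h2 : KnuthEquiv (a :: A ++ y :: x :: B) (a :: y :: A ++ x :: B) := by
      simpa using knuth_left [a] h1
    refine knuth_trans h2 ?_
    cases A with
    | nil =>
      exact Relation.EqvGen.rel _ _ (by
        simpa using KnuthStep.kxzy [] B a x y (ha a (by simp)) hxy)
    | cons c A =>
      have hc : c ≤ x := ha c (by simp)
      exact Relation.EqvGen.rel _ _ (by
        simpa using KnuthStep.kxzy [] (A ++ x :: B) a c y (hA.1 c (by simp)) (by omega))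

theorem Bump.knuth {r : List ℕ} {x y : ℕ} {r' : List ℕ} (h : Bump r x y r') :
    KnuthEquiv (r ++ [x]) (y :: r') := by
  obtain ⟨A, B, rfl, rfl, hA, hB, ha, hxy, hb⟩ := h
  have h1 := knuth_left A (knuth_move1 B y x hB hxy hb)
  have h2 := knuth_move2 A y x B hA hxy ha
  simpa using knuth_trans (by simpa using h1) h2

theorem Bump.sorted {r : List ℕ} {x y : ℕ} {r' : List ℕ} (h : Bump r x y r') :
    r.Pairwise (· ≤ ·) ∧ r'.Pairwise (· ≤ ·) := by
  obtain ⟨A, B, rfl, rfl, hA, hB, ha, hxy, hb⟩ := h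
  simp only [List.pairwise_append, List.pairwise_cons, List.mem_cons, forall_eq_or_imp]
  refine ⟨⟨hA, ⟨hb, hB⟩, fun a h => ⟨?_, fun b hb' => ?_⟩⟩,
    ⟨hA, ⟨fun b h => ?_, hB⟩, fun a h => ⟨ha a h, fun b hb' => ?_⟩⟩⟩
  · have := ha a h; omega
  · have := ha a h; have := hb b hb'; omega
  · have := hb b h; omega
  · have := ha a h; have := hb b hb'; omega

theorem Bump.perm {r : List ℕ} {x y : ℕ} {r' : List ℕ} (h : Bump r x y r') :
    (x :: r).Perm (y :: r') := by
  obtain ⟨A, B, rfl, rfl, -⟩ := h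
  have h1 : (x :: (A ++ y :: B)).Perm (x :: y :: (A ++ B)) := List.perm_middle.cons x
  have h2 : (y :: (A ++ x :: B)).Perm (y :: x :: (A ++ B)) := List.perm_middle.cons y
  exact h1.trans ((List.Perm.swap y x _).trans h2.symm)

theorem Bump.length {r : List ℕ} {x y : ℕ} {r' : List ℕ} (h : Bump r x y r') :
    r'.length = r.length := by
  obtain ⟨A, B, rfl, rfl, -⟩ := h
  simp

/-- uniqueness of the splitting. -/
theorem split_unique (P : ℕ → Prop) {A A' B B' : List ℕ} {y y' : ℕ}
    (h : A ++ y :: B = A' ++ y' :: B') (hA : ∀ a ∈ A, P a) (hA' : ∀ a ∈ A', P a)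
    (hy : ¬ P y) (hy' : ¬ P y') : A = A' ∧ y = y' ∧ B = B' := by
  induction A generalizing A' with
  | nil =>
    cases A' with
    | nil => simpa using h
    | cons a A' =>
      simp only [List.nil_append, List.cons_append, List.cons.injEq] at h
      exact absurd (hA' a (by simp)) (h.1 ▸ hy)
  | cons a A ih =>
    cases A' with
    | nil =>
      simp only [List.nil_append, List.cons_append, List.cons.injEq] at h
      exact absurd (hA a (by simp)) (h.1 ▸ hy')
    | cons a' A' =>
      simp only [List.cons_append, List.cons.injEq] at h
      have := ih h.2 (fun c hc => hA c (by simp [hc])) (fun c hc => hA' c (by simp [hc]))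
      simp [h.1, this]

theorem Bump.unique_right {r : List ℕ} {x y y' : ℕ} {r' r'' : List ℕ} (h : Bump r x y r')
    (h' : Bump r x y' r'') : y = y' ∧ r' = r'' := by
  obtain ⟨A, B, rfl, rfl, hA, hB, ha, hxy, hb⟩ := h
  obtain ⟨A', B', he, rfl, hA', hB', ha', hxy', hb'⟩ := h'
  obtain ⟨rfl, rfl, rfl⟩ := split_unique (· ≤ x) he ha ha' (by omega) (by omega)
  exact ⟨rfl, rfl⟩

theorem Bump.unique_left {r r'' : List ℕ} {x x' y : ℕ} {r' : List ℕ} (h : Bump r x y r')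
    (h' : Bump r'' x' y r') : x = x' ∧ r = r'' := by
  obtain ⟨A, B, rfl, rfl, hA, hB, ha, hxy, hb⟩ := h
  obtain ⟨A', B', rfl, he, hA', hB', ha', hxy', hb'⟩ := h'
  have he2 := congrArg List.reverse he
  simp only [List.reverse_append, List.reverse_cons, List.append_assoc, List.singleton_append] at he2
  obtain ⟨h1, h2, h3⟩ := split_unique (y ≤ ·) he2 (by simpa using hb) (by simpa using hb')
    (by omega) (by omega)
  rw [List.reverse_inj] at h1 h3
  subst h1 h2 h3
  exact ⟨rfl, rfl⟩

inductive Sw : List ℕ → List ℕ → List ℕ → List ℕ → Prop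
  | nil (r : List ℕ) : Sw r [] [] r
  | cons (r r1 r2 xs ys : List ℕ) (x y : ℕ) (h : Bump r x y r1) (h' : Sw r1 xs ys r2) :
      Sw r (x :: xs) (y :: ys) r2

theorem Sw.knuth {r xs ys r' : List ℕ} (h : Sw r xs ys r') : KnuthEquiv (r ++ xs) (ys ++ r') := by
  induction h with
  | nil r => simp only [List.append_nil, List.nil_append]; exact Relation.EqvGen.refl _
  | cons r r1 r2 xs ys x y h h' ih =>
    have h1 := knuth_right xs h.knuth
    have h2 := knuth_left [y] ih
    simp only [List.append_assoc, List.cons_append, List.nil_append] at h1 h2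
    exact knuth_trans h1 h2

theorem Sw.perm {r xs ys r' : List ℕ} (h : Sw r xs ys r') : (r ++ xs).Perm (ys ++ r') := by
  induction h with
  | nil r => simp
  | cons r r1 r2 xs ys x y h h' ih =>
    have h1 := h.perm
    have h2 : (r ++ x :: xs).Perm (x :: r ++ xs) := List.perm_middle
    have h3 := h1.append_right xs
    refine h2.trans (h3.trans ?_)
    exact ih.cons y

theorem Sw.length {r xs ys r' : List ℕ} (h : Sw r xs ys r') :
    ys.length = xs.length ∧ r'.length = r.length := by
  induction h with
  | nil r => simp
  | cons r r1 r2 xs ys x y h h' ih => simp [ih, h.length]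

theorem Sw.unique_right {r xs ys r' ys' r'' : List ℕ} (h : Sw r xs ys r') (h' : Sw r xs ys' r'') :
    ys = ys' ∧ r' = r'' := by
  induction h generalizing ys' with
  | nil r => cases h'; exact ⟨rfl, rfl⟩
  | cons r r1 r2 xs ys x y h hh ih =>
    cases h' with
    | cons _ r1' _ _ ys' _ y' g gg =>
      obtain ⟨rfl, rfl⟩ := h.unique_right g
      obtain ⟨rfl, rfl⟩ := ih gg
      exact ⟨rfl, rfl⟩

theorem Sw.unique_left {r xs ys r' xs' q : List ℕ} (h : Sw r xs ys r') (h' : Sw q xs' ys r') :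
    xs = xs' ∧ r = q := by
  induction h generalizing xs' q with
  | nil r => cases h'; exact ⟨rfl, rfl⟩
  | cons r r1 r2 xs ys x y h hh ih =>
    cases h' with
    | cons _ r1' _ xs' _ x' _ g gg =>
      obtain ⟨rfl, rfl⟩ := ih gg
      obtain ⟨rfl, rfl⟩ := h.unique_left g
      exact ⟨rfl, rfl⟩

theorem Sw.sorted_right {r xs ys r' : List ℕ} (h : Sw r xs ys r') (hr : r.Pairwise (· ≤ ·))
    (hx : xs.Pairwise (· ≤ ·)) : ys.Pairwise (· ≤ ·) ∧ r'.Pairwise (· ≤ ·) := by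
  induction h with
  | nil r => exact ⟨hx, hr⟩
  | cons r r1 r2 xs ys x y h hh ih =>
    rw [List.pairwise_cons] at hx
    obtain ⟨h1, h2⟩ := ih h.sorted.2 hx.2
    refine ⟨?_, h2⟩
    cases hh with
    | nil => simp
    | cons _ r3 _ xs ys x' y' g gg =>
      rw [List.pairwise_cons]
      refine ⟨?_, h1⟩
      have hyy : y ≤ y' := by
        have hxx := hx.1 x' (by simp)
        obtain ⟨A, B, rfl, rfl, hA, hB, ha, hxy, hb⟩ := h
        obtain ⟨A', B', he, -, hA', hB', ha', hxy', hb'⟩ := g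
        have hm : y' ∈ A ++ x :: B := by rw [he]; simp
        simp only [List.mem_append, List.mem_cons] at hm
        rcases hm with hm | hm | hm
        · have := ha _ hm; omega
        · omega
        · exact hb _ hm
      intro b hb
      rw [List.pairwise_cons] at h1
      rcases List.mem_cons.1 hb with rfl | hb
      · exact hyy
      · exact hyy.trans (h1.1 b hb)

theorem Sw.sorted_left {r xs ys r' : List ℕ} (h : Sw r xs ys r') (hr : r'.Pairwise (· ≤ ·))
    (hy : ys.Pairwise (· ≤ ·)) : xs.Pairwise (· ≤ ·) ∧ r.Pairwise (· ≤ ·) := by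
  induction h with
  | nil r => exact ⟨hy, hr⟩
  | cons r r1 r2 xs ys x y h hh ih =>
    rw [List.pairwise_cons] at hy
    obtain ⟨h1, h2⟩ := ih hr hy.2
    refine ⟨?_, h.sorted.1⟩
    cases hh with
    | nil => simp
    | cons _ r3 _ xs ys x' y' g gg =>
      rw [List.pairwise_cons]
      refine ⟨?_, h1⟩
      have hxx : x ≤ x' := by
        have hyy := hy.1 y' (by simp)
        obtain ⟨A, B, rfl, rfl, hA, hB, ha, hxy, hb⟩ := h
        obtain ⟨A', B', he, -, hA', hB', ha', hxy', hb'⟩ := g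
        by_contra hlt
        have hm : x ∈ A' ++ y' :: B' := by rw [← he]; simp
        simp only [List.mem_append, List.mem_cons] at hm
        rcases hm with hm | hm | hm
        · have := ha' _ hm; omega
        · omega
        · have := hb' _ hm; omega
      intro b hb
      rw [List.pairwise_cons] at h1
      rcases List.mem_cons.1 hb with rfl | hb
      · exact hxx
      · exact hxx.trans (h1.1 b hb)

theorem sorted_split (r : List ℕ) (hr : r.Pairwise (· ≤ ·)) (x : ℕ) :
    ∃ A B : List ℕ, r = A ++ B ∧ (∀ a ∈ A, a ≤ x) ∧ (∀ b ∈ B, x < b) := by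
  induction r with
  | nil => exact ⟨[], [], by simp⟩
  | cons a r ih =>
    rw [List.pairwise_cons] at hr
    by_cases h : a ≤ x
    · obtain ⟨A, B, rfl, hA, hB⟩ := ih hr.2
      refine ⟨a :: A, B, rfl, ?_, hB⟩
      intro c hc
      rcases List.mem_cons.1 hc with rfl | hc
      · exact h
      · exact hA c hc
    · refine ⟨[], a :: r, rfl, by simp, ?_⟩
      intro c hc
      rcases List.mem_cons.1 hc with rfl | hc
      · omega
      · have := hr.1 c hc; omega

theorem getD_mem {l : List ℕ} {j : ℕ} (h : j < l.length) : l.getD j 0 ∈ l := by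
  rw [List.getD_eq_getElem _ _ h]
  exact List.getElem_mem h

theorem Sw.exists_right (xs : List ℕ) : ∀ (r : List ℕ) (d : ℕ), r.Pairwise (· ≤ ·) →
    r.length = d + xs.length →
    (∀ j, j < xs.length → xs.getD j 0 < r.getD (d + j) 0) → ∃ ys r', Sw r xs ys r' := by
  induction xs with
  | nil => intro r d _ _ _; exact ⟨[], r, Sw.nil r⟩
  | cons x xs ih =>
    intro r d hr hl h
    obtain ⟨A, B, rfl, hA, hB⟩ := sorted_split r hr x
    simp only [List.length_append, List.length_cons] at hl
    have h0 := h 0 (by simp)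
    simp only [List.getD_cons_zero, Nat.add_zero] at h0
    have hAd : A.length ≤ d := by
      by_contra hlt
      rw [List.getD_append _ _ _ _ (by omega)] at h0
      have := hA _ (getD_mem (l := A) (j := d) (by omega))
      omega
    cases B with
    | nil => simp at hl; omega
    | cons y B =>
      rw [List.pairwise_append] at hr
      have hb : Bump (A ++ y :: B) x y (A ++ x :: B) :=
        ⟨A, B, rfl, rfl, hr.1, (List.pairwise_cons.1 hr.2.1).2, hA, hB y (by simp),
          (List.pairwise_cons.1 hr.2.1).1⟩
      obtain ⟨ys, r', hs⟩ := ih (A ++ x :: B) (d + 1) hb.sorted.2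
        (by simp at hl ⊢; omega) (by
          intro j hj
          have h1 := h (j + 1) (by simpa using hj)
          simp only [List.getD_cons_succ] at h1
          rw [List.getD_append_right _ _ _ _ (by omega)] at h1 ⊢
          obtain ⟨e, he⟩ : ∃ e, d + 1 + j - A.length = e + 1 := ⟨d + j - A.length, by omega⟩
          rw [show d + (j + 1) = d + 1 + j by ring, he] at h1
          rw [he]
          simpa using h1)
      exact ⟨y :: ys, r', Sw.cons _ _ _ _ _ _ _ hb hs⟩

theorem Sw.snoc {r xs ys r1 r2 : List ℕ} {x y : ℕ} (h : Sw r xs ys r1) (hb : Bump r1 x y r2) :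
    Sw r (xs ++ [x]) (ys ++ [y]) r2 := by
  induction h with
  | nil r => exact Sw.cons _ _ _ _ _ _ _ hb (Sw.nil _)
  | cons r r3 r4 xs ys x' y' g gg ih => exact Sw.cons _ _ _ _ _ _ _ g (ih hb)

theorem Sw.exists_left (ys : List ℕ) : ∀ (r' : List ℕ), r'.Pairwise (· ≤ ·) →
    ys.length ≤ r'.length →
    (∀ j, j < ys.length → r'.getD j 0 < ys.getD j 0) → ∃ r xs, Sw r xs ys r' := by
  induction ys using List.reverseRecOn with
  | nil => intro r _ _ _; exact ⟨r, [], Sw.nil r⟩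
  | append_singleton zs y ih =>
    intro r' hr hl h
    have h0 := h zs.length (by simp)
    rw [List.getD_append_right _ _ _ _ le_rfl] at h0
    simp only [Nat.sub_self, List.getD_cons_zero] at h0
    obtain ⟨A', B, rfl, hA, hB⟩ := sorted_split r' hr (y - 1)
    simp only [List.length_append, List.length_singleton] at hl
    have hAl : zs.length < A'.length := by
      by_contra hlt
      rw [List.getD_append_right _ _ _ _ (by omega)] at h0
      have := hB _ (getD_mem (l := B) (j := zs.length - A'.length) (by omega))
      omega
    obtain ⟨A, x, rfl⟩ : ∃ A x, A' = A ++ [x] := by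
      rcases List.eq_nil_or_concat A' with h | ⟨A, x, h⟩
      · subst h; simp at hAl
      · exact ⟨A, x, by simpa using h⟩
    simp only [List.length_append, List.length_singleton] at hAl
    rw [List.pairwise_append, List.pairwise_append] at hr
    have hx := hA x (by simp)
    have hb : Bump (A ++ y :: B) x y (A ++ [x] ++ B) := by
      refine ⟨A, B, rfl, by simp, hr.1.1, hr.2.1, fun a ha => hr.1.2.2 a ha x (by simp), ?_, ?_⟩
      · omega
      · intro b hb
        have := hB b hb
        omega
    obtain ⟨r, xs, hs⟩ := ih (A ++ y :: B) hb.sorted.1 (by simp; omega) (by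
      intro j hj
      have h1 := h j (by simp; omega)
      rw [List.getD_append _ _ _ _ (by omega)]
      rw [List.getD_append _ _ _ _ hj, List.append_assoc,
        List.getD_append _ _ _ _ (by omega)] at h1
      exact h1)
    exact ⟨r, xs ++ [x], hs.snoc hb⟩

def cge (n : ℕ) (α : ℕ → ℕ) (m : ℕ) : ℕ := ((Finset.range n).filter (fun k => m ≤ α k)).card

theorem dsort_eq (n : ℕ) (α : ℕ → ℕ) (i : ℕ) : dsort n α i = sSup {m | i < cge n α m} := by
  unfold dsort cge
  congr 1
  ext m
  simp only [Set.mem_ofPred_eq]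
  have : ∀ (d1 d2 : DecidablePred (fun k => m ≤ α k)),
      i < (@Finset.filter _ (fun k => m ≤ α k) d1 (Finset.range n)).card ↔
      i < (@Finset.filter _ (fun k => m ≤ α k) d2 (Finset.range n)).card := by
    intro d1 d2
    rw [Subsingleton.elim d1 d2]
  exact this _ _

theorem cge_anti (n : ℕ) (α : ℕ → ℕ) {m m' : ℕ} (h : m ≤ m') : cge n α m' ≤ cge n α m := by
  apply Finset.card_le_card
  intro k hk
  simp only [Finset.mem_filter] at *
  exact ⟨hk.1, h.trans hk.2⟩

theorem le_sum_range (n : ℕ) (α : ℕ → ℕ) (k : ℕ) (hk : k < n) :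
    α k ≤ ∑ j ∈ Finset.range n, α j :=
  Finset.single_le_sum (f := α) (fun _ _ => Nat.zero_le _) (Finset.mem_range.2 hk)

theorem cge_zero (n : ℕ) (α : ℕ → ℕ) (m : ℕ) (h : ∑ j ∈ Finset.range n, α j < m) :
    cge n α m = 0 := by
  unfold cge
  rw [Finset.card_eq_zero, Finset.filter_eq_empty_iff]
  intro k hk
  have := le_sum_range n α k (Finset.mem_range.1 hk)
  omega

theorem dsort_ge_iff (n : ℕ) (α : ℕ → ℕ) (i m : ℕ) (hm : 1 ≤ m) :
    m ≤ dsort n α i ↔ i < cge n α m := by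
  rw [dsort_eq]
  have hb : BddAbove {m | i < cge n α m} := by
    refine ⟨∑ j ∈ Finset.range n, α j, ?_⟩
    intro m' hm'
    simp only [Set.mem_ofPred_eq] at hm'
    by_contra hlt
    rw [cge_zero n α m' (by omega)] at hm'
    omega
  constructor
  · intro h
    have hne : {m | i < cge n α m}.Nonempty := by
      by_contra he
      rw [Set.not_nonempty_iff_eq_empty] at he
      rw [he] at h
      simp at h
      omega
    have := Nat.sSup_mem hne hb
    simp only [Set.mem_ofPred_eq] at this
    exact this.trans_le (cge_anti n α h)
  · intro h
    exact le_csSup hb h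

theorem dsort_congr (n : ℕ) (α α' : ℕ → ℕ) (h : ∀ m, cge n α m = cge n α' m) (i : ℕ) :
    dsort n α i = dsort n α' i := by
  rw [dsort_eq, dsort_eq]
  simp only [h]

theorem layer (x N : ℕ) (h : x ≤ N) :
    x = ∑ m ∈ Finset.Icc 1 N, if m ≤ x then 1 else 0 := by
  rw [← Finset.sum_filter, Finset.sum_const, smul_eq_mul, mul_one]
  have : (Finset.Icc 1 N).filter (fun m => m ≤ x) = Finset.Icc 1 x := by
    ext m
    simp only [Finset.mem_filter, Finset.mem_Icc]
    omega
  rw [this]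
  simp

theorem dsort_le (n : ℕ) (α : ℕ → ℕ) (i : ℕ) : dsort n α i ≤ ∑ j ∈ Finset.range n, α j := by
  by_contra h
  have h1 := (dsort_ge_iff n α i (∑ j ∈ Finset.range n, α j + 1) (by omega)).1 (by omega)
  rw [cge_zero n α _ (by omega)] at h1
  omega

theorem dsort_top (n : ℕ) (α : ℕ → ℕ) (S : Finset ℕ) (hS : S ⊆ Finset.range n)
    (h : ∀ j ∈ S, ∀ j' < n, j' ∉ S → α j' ≤ α j) :
    ∑ r ∈ Finset.range S.card, dsort n α r ≤ ∑ j ∈ S, α j := by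
  set N := ∑ j ∈ Finset.range n, α j with hN
  have e1 : ∑ r ∈ Finset.range S.card, dsort n α r =
      ∑ m ∈ Finset.Icc 1 N, ∑ r ∈ Finset.range S.card, if m ≤ dsort n α r then 1 else 0 := by
    rw [Finset.sum_comm]
    apply Finset.sum_congr rfl
    intro r _
    exact layer _ _ (dsort_le n α r)
  have e2 : ∑ j ∈ S, α j = ∑ m ∈ Finset.Icc 1 N, ∑ j ∈ S, if m ≤ α j then 1 else 0 := by
    rw [Finset.sum_comm]
    apply Finset.sum_congr rfl
    intro j hj
    exact layer _ _ (le_sum_range n α j (Finset.mem_range.1 (hS hj)))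
  rw [e1, e2]
  apply Finset.sum_le_sum
  intro m hm
  rw [Finset.mem_Icc] at hm
  rw [← Finset.sum_filter, ← Finset.sum_filter, Finset.sum_const, Finset.sum_const, smul_eq_mul,
    mul_one, smul_eq_mul, mul_one]
  by_cases hall : ∀ j ∈ S, m ≤ α j
  · rw [Finset.filter_true_of_mem hall]
    exact (Finset.card_filter_le _ _).trans (by simp)
  · push Not at hall
    obtain ⟨j0, hj0, hlt⟩ := hall
    have h1 : (Finset.range S.card).filter (fun r => m ≤ dsort n α r) ⊆
        Finset.range (cge n α m) := by
      intro r hr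
      simp only [Finset.mem_filter] at hr
      rw [Finset.mem_range]
      exact (dsort_ge_iff n α r m hm.1).1 hr.2
    refine (Finset.card_le_card h1).trans ?_
    rw [Finset.card_range]
    apply Finset.card_le_card
    intro j hj
    simp only [Finset.mem_filter, Finset.mem_range] at *
    refine ⟨?_, hj.2⟩
    by_contra hjS
    have := h j0 hj0 j hj.1 hjS
    omega

def wofG {τ : Type} (n : ℕ) (V : ℕ → List τ) : List τ := ((List.range n).reverse.map V).flatten

theorem wofG_succ {τ : Type} (n : ℕ) (V : ℕ → List τ) : wofG (n + 1) V = V n ++ wofG n V := by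
  simp [wofG, List.range_succ]

theorem wofG_map {τ σ : Type} (n : ℕ) (V : ℕ → List τ) (f : τ → σ) :
    (wofG n V).map f = wofG n (fun j => (V j).map f) := by
  simp [wofG, List.map_flatten, List.map_map, Function.comp_def]

theorem wofG_congr {τ : Type} (n : ℕ) (V W : ℕ → List τ) (h : ∀ j < n, V j = W j) :
    wofG n V = wofG n W := by
  induction n with
  | zero => rfl
  | succ n ih => rw [wofG_succ, wofG_succ, h n (by omega), ih (fun j hj => h j (by omega))]

theorem wofG_mem {τ : Type} (n : ℕ) (V : ℕ → List τ) (x : τ) :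
    x ∈ wofG n V ↔ ∃ j < n, x ∈ V j := by
  simp [wofG]

theorem wofG_pairwise {τ : Type} (R : τ → τ → Prop) (n : ℕ) (V : ℕ → List τ)
    (h1 : ∀ j < n, (V j).Pairwise R)
    (h2 : ∀ j < n, ∀ j' < j, ∀ x ∈ V j, ∀ y ∈ V j', R x y) : (wofG n V).Pairwise R := by
  induction n with
  | zero => simp [wofG]
  | succ n ih =>
    rw [wofG_succ, List.pairwise_append]
    refine ⟨h1 n (by omega), ih (fun j hj => h1 j (by omega)) (fun j hj => h2 j (by omega)), ?_⟩
    intro a ha b hb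
    rw [wofG_mem] at hb
    obtain ⟨j, hj, hb⟩ := hb
    exact h2 n (by omega) j hj a ha b hb

theorem wofG_countP {τ : Type} (p : τ → Bool) (n : ℕ) (V : ℕ → List τ) :
    (wofG n V).countP p = ∑ j ∈ Finset.range n, (V j).countP p := by
  induction n with
  | zero => simp [wofG]
  | succ n ih => rw [wofG_succ, List.countP_append, Finset.sum_range_succ, ih, add_comm]

theorem wof_eq (n : ℕ) (v : ℕ → List ℕ) : wordOfFactors n v = wofG n v := rfl

theorem inc_of_color (n : ℕ) (v : ℕ → List ℕ) (S : Finset ℕ) (V : ℕ → List (ℕ × ℕ))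
    (h0 : ∀ j < n, (V j).map Prod.fst = v j)
    (h1 : ∀ j < n, (V j).Pairwise (ColR S))
    (h2 : ∀ j < n, ∀ j' < j, ∀ x ∈ V j, ∀ y ∈ V j', ColR S x y) (m : ℕ)
    (hm : m ≤ ∑ j ∈ Finset.range n, (V j).countP (fun a => decide (a.2 ∈ S))) :
    Inc S m (wordOfFactors n v) := by
  refine ⟨wofG n V, ?_, wofG_pairwise _ n V h1 h2, ?_⟩
  · rw [wofG_map, wof_eq]
    exact wofG_congr n _ _ h0
  · rw [wofG_countP]
    exact hm


def Frank (n : ℕ) (α : ℕ → ℕ) (w : List ℕ) : Prop :=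
  ∀ (S : Finset ℕ) (m : ℕ), Inc S m w → m ≤ ∑ r ∈ Finset.range S.card, dsort n α r

theorem pw_of_fst (S : Finset ℕ) (L : List (ℕ × ℕ)) (l : List ℕ) (h : L.map Prod.fst = l)
    (hl : l.Pairwise (· ≤ ·)) : L.Pairwise (ColR S) := by
  subst h
  rw [List.pairwise_map] at hl
  exact hl.imp (fun h _ _ => h)

theorem frank_pair (n : ℕ) (α : ℕ → ℕ) (v : ℕ → List ℕ) (hlen : ∀ j, (v j).length = α j)
    (hs : ∀ j, (v j).Pairwise (· ≤ ·)) (hF : Frank n α (wordOfFactors n v))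
    (i i' a b : ℕ) (hii : i' < i) (hi : i < n) (ha : a ≤ α i) (hb : b ≤ α i')
    (hab : ∀ x ∈ (v i).take a, ∀ y ∈ (v i').drop (α i' - b), x ≤ y) :
    a + b ≤ max (α i) (α i') := by
  obtain ⟨c, o, hco, hM, hcn⟩ : ∃ c o, ((c = i ∧ o = i') ∨ (c = i' ∧ o = i)) ∧
      α o ≤ α c ∧ α c = max (α i) (α i') := by
    rcases le_total (α i) (α i') with h | h
    · exact ⟨i', i, Or.inr ⟨rfl, rfl⟩, h, (max_eq_right h).symm⟩
    · exact ⟨i, i', Or.inl ⟨rfl, rfl⟩, h, (max_eq_left h).symm⟩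
  rw [← hcn]
  set S := (Finset.range n).filter (fun j => α c ≤ α j ∧ j ≠ o) with hS
  have hcS : c ∈ S := by
    simp only [hS, Finset.mem_filter, Finset.mem_range]
    omega
  have hnS : n ∉ S := by
    simp [hS]
  have htop : ∑ r ∈ Finset.range S.card, dsort n α r ≤ ∑ j ∈ S, α j := by
    apply dsort_top
    · exact Finset.filter_subset _ _
    · intro j hj j' hj' hj'S
      simp only [hS, Finset.mem_filter, Finset.mem_range] at hj hj'S
      by_cases ho : j' = o
      · subst ho; omega
      · have : ¬ (α c ≤ α j') := fun h => hj'S ⟨hj', h, ho⟩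
        omega
  let V : ℕ → List (ℕ × ℕ) := fun j =>
    if j = i then ((v i).take a).map (fun x => (x, c)) ++ ((v i).drop a).map (fun x => (x, n))
    else if j = i' then ((v i').take (α i' - b)).map (fun x => (x, n)) ++
      ((v i').drop (α i' - b)).map (fun x => (x, c))
    else (v j).map (fun x => (x, j))
  have hVi : V i = ((v i).take a).map (fun x => (x, c)) ++ ((v i).drop a).map (fun x => (x, n)) := by
    simp [V]
  have hVi' : V i' = ((v i').take (α i' - b)).map (fun x => (x, n)) ++
      ((v i').drop (α i' - b)).map (fun x => (x, c)) := by
    simp [V, hii.ne]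
  have hVj : ∀ j, j ≠ i → j ≠ i' → V j = (v j).map (fun x => (x, j)) := by
    intro j h1 h2
    simp [V, h1, h2]
  have hfst : ∀ j, (V j).map Prod.fst = v j := by
    intro j
    by_cases h1 : j = i
    · subst h1; rw [hVi]; simp [Function.comp_def]
    · by_cases h2 : j = i'
      · subst h2; rw [hVi']; simp [Function.comp_def]
      · rw [hVj j h1 h2]; simp [Function.comp_def]
  have hmem : ∀ j, ∀ x ∈ V j, x.2 ∈ S → (j = i ∧ x.2 = c ∧ x.1 ∈ (v i).take a) ∨
      (j = i' ∧ x.2 = c ∧ x.1 ∈ (v i').drop (α i' - b)) ∨ (j ≠ i ∧ j ≠ i' ∧ x.2 = j) := by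
    intro j x hx hxS
    by_cases h1 : j = i
    · subst h1
      rw [hVi, List.mem_append, List.mem_map, List.mem_map] at hx
      rcases hx with ⟨y, hy, rfl⟩ | ⟨y, hy, rfl⟩
      · exact Or.inl ⟨rfl, rfl, hy⟩
      · exact absurd hxS hnS
    · by_cases h2 : j = i'
      · subst h2
        rw [hVi', List.mem_append, List.mem_map, List.mem_map] at hx
        rcases hx with ⟨y, hy, rfl⟩ | ⟨y, hy, rfl⟩
        · exact absurd hxS hnS
        · exact Or.inr (Or.inl ⟨rfl, rfl, hy⟩)
      · rw [hVj j h1 h2, List.mem_map] at hx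
        obtain ⟨y, hy, rfl⟩ := hx
        exact Or.inr (Or.inr ⟨h1, h2, rfl⟩)
  have hinc : Inc S (∑ j ∈ Finset.range n, (V j).countP (fun a => decide (a.2 ∈ S)))
      (wordOfFactors n v) := by
    apply inc_of_color n v S V (fun j _ => hfst j) (fun j _ => pw_of_fst S _ _ (hfst j) (hs j))
    · intro j hj j' hj' x hx y hy hxS hxy
      have h1 := hmem j x hx hxS
      have h2 := hmem j' y hy (hxy ▸ hxS)
      rcases h1 with h1 | h1 | h1 <;> rcases h2 with h2 | h2 | h2
      · omega
      · exact hab _ h1.2.2 _ h2.2.2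
      · omega
      · omega
      · omega
      · omega
      · omega
      · omega
      · omega
    · exact le_rfl
  have h1 := (hF _ _ hinc).trans htop
  have hcnt : a + b + ∑ j ∈ S.erase c, α j ≤
      ∑ j ∈ Finset.range n, (V j).countP (fun a => decide (a.2 ∈ S)) := by
    have hii' : i ∉ insert i' (S.erase c) := by
      simp only [hS, Finset.mem_insert, Finset.mem_erase, Finset.mem_filter, Finset.mem_range]
      omega
    have hi'S : i' ∉ S.erase c := by
      simp only [hS, Finset.mem_erase, Finset.mem_filter, Finset.mem_range]
      omega
    have hsub : insert i (insert i' (S.erase c)) ⊆ Finset.range n := by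
      intro j hj
      simp only [hS, Finset.mem_insert, Finset.mem_erase, Finset.mem_filter, Finset.mem_range] at *
      omega
    refine le_trans ?_ (Finset.sum_le_sum_of_subset hsub)
    rw [Finset.sum_insert hii', Finset.sum_insert hi'S]
    have e1 : a ≤ (V i).countP (fun a => decide (a.2 ∈ S)) := by
      rw [hVi, List.countP_append, List.countP_map, List.countP_eq_length.2]
      · simp [hlen]; omega
      · simp [hcS]
    have e2 : b ≤ (V i').countP (fun a => decide (a.2 ∈ S)) := by
      rw [hVi', List.countP_append, List.countP_map, List.countP_map,
        (List.countP_eq_length (l := (v i').drop (α i' - b))).2]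
      · simp [hlen]; omega
      · simp [hcS]
    have e3 : ∑ j ∈ S.erase c, α j ≤
        ∑ j ∈ S.erase c, (V j).countP (fun a => decide (a.2 ∈ S)) := by
      apply Finset.sum_le_sum
      intro j hj
      have hj' := hj
      simp only [hS, Finset.mem_erase, Finset.mem_filter, Finset.mem_range] at hj'
      rw [hVj j (by omega) (by omega), List.countP_map, List.countP_eq_length.2]
      · simp [hlen]
      · simp [Finset.mem_of_mem_erase hj]
    omega
  have h3 := Finset.add_sum_erase S α hcS
  omega

theorem getD_eq_getElem' (l : List ℕ) (p : ℕ) (h : p < l.length) : l.getD p 0 = l[p] := by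
  simp [h]

theorem domin (n : ℕ) (α : ℕ → ℕ) (v : ℕ → List ℕ) (hlen : ∀ j, (v j).length = α j)
    (hs : ∀ j, (v j).Pairwise (· ≤ ·)) (hF : Frank n α (wordOfFactors n v))
    (i i' p q : ℕ) (hii : i' < i) (hi : i < n) (hp : p < α i) (hq : q < α i')
    (hpq : max (α i) (α i') < p + 1 + (α i' - q)) : (v i').getD q 0 < (v i).getD p 0 := by
  by_contra hcon
  have hl1 := hlen i
  have hl2 := hlen i'
  rw [getD_eq_getElem' _ _ (by omega), getD_eq_getElem' _ _ (by omega)] at hcon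
  have := frank_pair n α v hlen hs hF i i' (p + 1) (α i' - q) hii hi (by omega) (by omega) ?_
  · omega
  · intro x hx y hy
    rw [show α i' - (α i' - q) = q by omega] at hy
    rw [List.mem_iff_getElem] at hx hy
    obtain ⟨s, hs1, rfl⟩ := hx
    obtain ⟨t, ht1, rfl⟩ := hy
    simp only [List.getElem_take, List.getElem_drop]
    simp only [List.length_take, List.length_drop] at hs1 ht1
    have h1 : (v i)[s]'(by omega) ≤ (v i)[p]'(by omega) := by
      rcases Nat.lt_or_ge s p with h | h
      · exact List.pairwise_iff_getElem.1 (hs i) s p (by omega) (by omega) h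
      · have : s = p := by omega
        subst this; exact le_rfl
    have h2 : (v i')[q]'(by omega) ≤ (v i')[q + t]'(by omega) := by
      rcases Nat.eq_zero_or_pos t with h | h
      · subst h; exact le_rfl
      · exact List.pairwise_iff_getElem.1 (hs i') q (q + t) (by omega) (by omega) (by omega)
    omega

theorem domin_ge (n : ℕ) (α : ℕ → ℕ) (v : ℕ → List ℕ) (hlen : ∀ j, (v j).length = α j)
    (hs : ∀ j, (v j).Pairwise (· ≤ ·)) (hF : Frank n α (wordOfFactors n v))
    (i i' j : ℕ) (hii : i' < i) (hi : i < n) (h : α i' ≤ α i) (hj : j < α i') :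
    (v i').getD j 0 < (v i).getD (α i - α i' + j) 0 :=
  domin n α v hlen hs hF i i' _ _ hii hi (by omega) (by omega) (by omega)

theorem domin_le (n : ℕ) (α : ℕ → ℕ) (v : ℕ → List ℕ) (hlen : ∀ j, (v j).length = α j)
    (hs : ∀ j, (v j).Pairwise (· ≤ ·)) (hF : Frank n α (wordOfFactors n v))
    (i i' j : ℕ) (hii : i' < i) (hi : i < n) (h : α i ≤ α i') (hj : j < α i) :
    (v i').getD j 0 < (v i).getD j 0 :=
  domin n α v hlen hs hF i i' _ _ hii hi (by omega) (by omega) (by omega)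

theorem nonzero_le (n : ℕ) (α : ℕ → ℕ) (v : ℕ → List ℕ) (hlen : ∀ j, (v j).length = α j)
    (hs : ∀ j, (v j).Pairwise (· ≤ ·)) (hF : Frank n α (wordOfFactors n v))
    (i K : ℕ) (hi : i < n) (hK : ∀ j ≤ i, ∀ x ∈ v j, 1 ≤ x ∧ x ≤ K) :
    ((Finset.range (i + 1)).filter (fun j => α j ≠ 0)).card ≤ K := by
  by_contra hcon
  push Not at hcon
  set A := (Finset.range (i + 1)).filter (fun j => α j ≠ 0) with hA
  set T := (Finset.Ico (i + 1) n).filter (fun j => α j ≠ 0) with hT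
  set Z := (Finset.range n).filter (fun j => α j ≠ 0) with hZ
  set S := (Finset.Icc 1 K).image (fun x => n + x) ∪ T with hS
  have hScard : S.card ≤ K + T.card := by
    refine (Finset.card_union_le _ _).trans ?_
    have := Finset.card_image_le (s := Finset.Icc 1 K) (f := fun x => n + x)
    rw [Nat.card_Icc] at this
    omega
  have hZcard : Z.card = A.card + T.card := by
    rw [← Finset.card_union_of_disjoint]
    · congr 1
      ext j
      simp only [hA, hT, hZ, Finset.mem_union, Finset.mem_filter, Finset.mem_range, Finset.mem_Ico]
      omega
    · rw [Finset.disjoint_left]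
      intro j hj hj'
      simp only [hA, hT, Finset.mem_filter, Finset.mem_range, Finset.mem_Ico] at hj hj'
      omega
  let V : ℕ → List (ℕ × ℕ) := fun j => (v j).map (fun x => (x, if j ≤ i then n + x else j))
  have hfst : ∀ j, (V j).map Prod.fst = v j := by
    intro j
    simp [V, Function.comp_def]
  have hinc : Inc S (∑ j ∈ Finset.range n, α j) (wordOfFactors n v) := by
    apply inc_of_color n v S V (fun j _ => hfst j) (fun j _ => pw_of_fst S _ _ (hfst j) (hs j))
    · intro j hj j' hj' x hx y hy hxS hxy
      simp only [V, List.mem_map] at hx hy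
      obtain ⟨a, ha, rfl⟩ := hx
      obtain ⟨b, hb, rfl⟩ := hy
      simp only at hxy ⊢
      split_ifs at hxy <;> omega
    · apply Finset.sum_le_sum
      intro j hj
      rw [Finset.mem_range] at hj
      rw [List.countP_eq_length.2]
      · simp [V, hlen]
      · intro x hx
        simp only [V, List.mem_map] at hx
        obtain ⟨a, ha, rfl⟩ := hx
        have hne : α j ≠ 0 := by
          rw [← hlen j]
          have := List.length_pos_of_mem ha
          omega
        simp only [decide_eq_true_eq, hS, Finset.mem_union, Finset.mem_image, Finset.mem_Icc, hT,
          Finset.mem_filter, Finset.mem_Ico]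
        split_ifs with h
        · exact Or.inl ⟨a, hK j h a ha, rfl⟩
        · exact Or.inr ⟨by omega, hne⟩
  have h1 := hF _ _ hinc
  have hZne : Z.Nonempty := by
    rw [← Finset.card_pos]; omega
  obtain ⟨j0, hj0, hmin⟩ := Finset.exists_min_image Z α hZne
  have h2 : ∑ r ∈ Finset.range (Z.erase j0).card, dsort n α r ≤ ∑ j ∈ Z.erase j0, α j := by
    apply dsort_top
    · exact (Finset.erase_subset _ _).trans (Finset.filter_subset _ _)
    · intro j hj j' hj' hj'S
      by_cases h0 : j' = j0
      · subst h0
        exact hmin j (Finset.mem_of_mem_erase hj)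
      · have : α j' = 0 := by
          by_contra hne
          apply hj'S
          rw [Finset.mem_erase]
          refine ⟨h0, ?_⟩
          simp only [hZ, Finset.mem_filter, Finset.mem_range]
          exact ⟨hj', hne⟩
        omega
  have h3 : ∑ r ∈ Finset.range S.card, dsort n α r ≤
      ∑ r ∈ Finset.range (Z.erase j0).card, dsort n α r := by
    apply Finset.sum_le_sum_of_subset
    rw [Finset.range_subset_range, Finset.card_erase_of_mem hj0]
    omega
  have h4 := Finset.add_sum_erase Z α hj0
  have h5 : ∑ j ∈ Z, α j ≤ ∑ j ∈ Finset.range n, α j :=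
    Finset.sum_le_sum_of_subset (Finset.filter_subset _ _)
  have h6 : α j0 ≠ 0 := by
    simp only [hZ, Finset.mem_filter] at hj0
    exact hj0.2
  omega


def ShapeOK (n : ℕ) (α : ℕ → ℕ) (w : List ℕ) : Prop :=
  Frank n α w ∧ ∀ k, Inc (Finset.range k) (∑ r ∈ Finset.range k, dsort n α r) w

def Good (n : ℕ) (α Φ : ℕ → ℕ) (v : ℕ → List ℕ) : Prop :=
  (∀ i, n ≤ i → v i = []) ∧ (∀ i, (v i).length = α i) ∧ (∀ i, (v i).Pairwise (· ≤ ·)) ∧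
  (∀ i, ∀ x ∈ v i, 1 ≤ x ∧ x ≤ Φ i) ∧ ShapeOK n α (wordOfFactors n v)

theorem bword_biword (n : ℕ) (α : ℕ → ℕ) (v : ℕ → List ℕ) (hlen : ∀ i, (v i).length = α i)
    (hs : ∀ i, (v i).Pairwise (· ≤ ·)) (hpos : ∀ i, ∀ x ∈ v i, 1 ≤ x) :
    IsBiword (bwordComp n α) (wordOfFactors n v) := by
  set L := wofG n (fun j => (v j).map (fun x => ((j + 1, x) : ℕ × ℕ))) with hL
  have e1 : bwordComp n α = L.map Prod.fst := by
    rw [hL, wofG_map]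
    apply wofG_congr
    intro j _
    simp [Function.comp_def, hlen]
  have e2 : wordOfFactors n v = L.map Prod.snd := by
    rw [hL, wofG_map, wof_eq]
    apply wofG_congr
    intro j _
    simp [Function.comp_def]
  have hP : L.Pairwise (fun a b => b.1 ≤ a.1 ∧ (b.2 < a.2 → b.1 < a.1)) := by
    apply wofG_pairwise
    · intro j _
      rw [List.pairwise_map]
      exact (hs j).imp (fun h => ⟨le_rfl, fun h' => by simp only at h'; omega⟩)
    · intro j _ j' hj' x hx y hy
      rw [List.mem_map] at hx hy
      obtain ⟨a, _, rfl⟩ := hx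
      obtain ⟨b, _, rfl⟩ := hy
      simp only
      omega
  have hmem : ∀ p ∈ L, 1 ≤ p.1 ∧ 1 ≤ p.2 := by
    intro p hp
    rw [hL, wofG_mem] at hp
    obtain ⟨j, _, hp⟩ := hp
    rw [List.mem_map] at hp
    obtain ⟨x, hx, rfl⟩ := hp
    exact ⟨by simp, hpos j x hx⟩
  rw [e1, e2]
  refine ⟨by simp, ?_, ?_, ?_⟩
  · intro x hx
    rw [List.mem_map] at hx
    obtain ⟨p, hp, rfl⟩ := hx
    exact (hmem p hp).1
  · intro x hx
    rw [List.mem_map] at hx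
    obtain ⟨p, hp, rfl⟩ := hx
    exact (hmem p hp).2
  · intro p hp
    rw [List.length_map] at hp
    have h := List.pairwise_iff_getElem.1 hP p (p + 1) (by omega) hp (by omega)
    rw [getD_eq_getElem' _ _ (by simpa using hp), getD_eq_getElem' _ _ (by simp; omega),
      getD_eq_getElem' _ _ (by simpa using hp), getD_eq_getElem' _ _ (by simp; omega)]
    simpa using h

theorem bword_count (n : ℕ) (α : ℕ → ℕ) (u : ℕ) :
    (bwordComp n α).count u = if 1 ≤ u ∧ u ≤ n then α (u - 1) else 0 := by
  have e : ∀ n, bwordComp n α = wofG n (fun i => List.replicate (α i) (i + 1)) := fun _ => rfl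
  rw [e]
  induction n with
  | zero =>
    rw [if_neg (by omega)]
    simp [wofG]
  | succ n ih =>
    rw [wofG_succ, List.count_append, ih, List.count_replicate]
    by_cases h : n + 1 = u
    · subst h
      simp
    · rw [if_neg (by simpa using h)]
      split_ifs <;> omega

theorem bword_count_any (n : ℕ) (α : ℕ → ℕ) (u : ℕ) (d : DecidableEq ℕ) :
    @List.count ℕ (@instBEqOfDecidableEq ℕ d) u (bwordComp n α) =
      if 1 ≤ u ∧ u ≤ n then α (u - 1) else 0 := by
  rw [← bword_count, Subsingleton.elim d instDecidableEqNat]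

theorem headI_eq (l : List ℕ) (h : 0 < l.length) : l.headI = l[0] := by
  cases l with
  | nil => simp at h
  | cons a t => rfl

theorem shape_of_ok (n : ℕ) (B : BurgeData) (α : ℕ → ℕ) (top w : List ℕ) (hb : IsBiword top w) :
    (∀ r, rowLenOf (B.out top w).sh r = dsort n α r) ↔ ShapeOK n α w := by
  have hsp := B.shape_part _ _ hb
  have hss := B.ssytP _ _ hb
  have hk := B.knuthP _ _ hb
  constructor
  · intro h
    refine ⟨?_, ?_⟩
    · intro S m hI
      have := tab_inc_le hsp hss S m ((inc_knuth hk).2 hI)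
      simpa only [h] using this
    · intro k
      have := (inc_knuth hk).1 (tab_inc hsp hss k)
      simpa only [h] using this
  · intro h
    have key : ∀ k, ∑ r ∈ Finset.range k, rowLenOf (B.out top w).sh r =
        ∑ r ∈ Finset.range k, dsort n α r := by
      intro k
      apply le_antisymm
      · have := h.1 _ _ ((inc_knuth hk).1 (tab_inc hsp hss k))
        simpa using this
      · have := tab_inc_le hsp hss _ _ ((inc_knuth hk).2 (h.2 k))
        simpa using this
    intro r
    have h1 := key r
    have h2 := key (r + 1)
    rw [Finset.sum_range_succ, Finset.sum_range_succ] at h2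
    omega

theorem mem_WSet (n : ℕ) (B : BurgeData) (α Φ : ℕ → ℕ) (v : ℕ → List ℕ) :
    v ∈ WSet n B α Φ ↔ Good n α Φ v := by
  constructor
  · rintro ⟨h1, h2, h3, h4, _, h6, _⟩
    have h3' : ∀ i, (v i).Pairwise (· ≤ ·) := fun i => List.isChain_iff_pairwise.1 (h3 i)
    refine ⟨h1, h2, h3', h4, ?_⟩
    exact (shape_of_ok n B α _ _ (bword_biword n α v h2 h3' (fun i x hx => (h4 i x hx).1))).1 h6
  · rintro ⟨h1, h2, h3, h4, h5⟩
    have hb := bword_biword n α v h2 h3 (fun i x hx => (h4 i x hx).1)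
    refine ⟨h1, h2, fun i => List.isChain_iff_pairwise.2 (h3 i), h4, ?_,
      (shape_of_ok n B α _ _ hb).2 h5, ?_⟩
    · intro i i' hii hi hi' _
      have hin : i < n := by
        by_contra hcon
        exact hi (h1 i (by omega))
      have p1 := List.length_pos_of_ne_nil hi
      have p2 := List.length_pos_of_ne_nil hi'
      have l1 := h2 i
      have l2 := h2 i'
      have := domin n α v h2 h3 h5.1 i i' (α i - 1) 0 hii hin (by omega) (by omega) (by omega)
      rw [getD_eq_getElem' _ _ (by omega), getD_eq_getElem' _ _ (by omega)] at this
      have e1 : (v i').headI = (v i')[0]'(by omega) := headI_eq _ _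
      have e2 : (v i).getLastD 0 = (v i)[α i - 1]'(by omega) := by
        rw [List.getLastD_eq_getLast?, List.getLast?_eq_getLast_of_ne_nil hi,
          List.getLast_eq_getElem]
        simp [h2]
      rw [e1, e2]
      exact this
    · intro u
      rw [B.contentQ _ _ hb]
      refine (bword_count_any n α u _).trans ?_
      split_ifs <;> rfl


def WEq (n : ℕ) (α Φ α' Φ' : ℕ → ℕ) : Prop :=
  ∃ R : (ℕ → List ℕ) → (ℕ → List ℕ) → Prop,
    (∀ v v', R v v' → Good n α Φ v ∧ Good n α' Φ' v' ∧
      KnuthEquiv (wordOfFactors n v) (wordOfFactors n v')) ∧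
    (∀ v, Good n α Φ v → ∃ v', R v v') ∧
    (∀ v', Good n α' Φ' v' → ∃ v, R v v') ∧
    (∀ v a b, R v a → R v b → a = b) ∧
    (∀ v a b, R a v → R b v → a = b)

theorem WEq.of_iff {n : ℕ} {α Φ Φ' : ℕ → ℕ} (h : ∀ v, Good n α Φ v ↔ Good n α Φ' v) :
    WEq n α Φ α Φ' := by
  refine ⟨fun v v' => v = v' ∧ Good n α Φ v, ?_, ?_, ?_, ?_, ?_⟩
  · rintro v v' ⟨rfl, hv⟩
    exact ⟨hv, (h v).1 hv, Relation.EqvGen.refl _⟩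
  · intro v hv
    exact ⟨v, rfl, hv⟩
  · intro v hv
    exact ⟨v, rfl, (h v).2 hv⟩
  · rintro v a b ⟨rfl, _⟩ ⟨rfl, _⟩
    rfl
  · rintro v a b ⟨rfl, _⟩ ⟨rfl, _⟩
    rfl

theorem WEq.symm {n : ℕ} {α Φ α' Φ' : ℕ → ℕ} (h : WEq n α Φ α' Φ') : WEq n α' Φ' α Φ := by
  obtain ⟨R, h1, h2, h3, h4, h5⟩ := h
  exact ⟨fun a b => R b a, fun v v' h => ⟨(h1 _ _ h).2.1, (h1 _ _ h).1, knuth_symm (h1 _ _ h).2.2⟩,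
    h3, h2, h5, h4⟩

theorem WEq.trans {n : ℕ} {α Φ α' Φ' α'' Φ'' : ℕ → ℕ} (h : WEq n α Φ α' Φ')
    (h' : WEq n α' Φ' α'' Φ'') : WEq n α Φ α'' Φ'' := by
  obtain ⟨R, h1, h2, h3, h4, h5⟩ := h
  obtain ⟨Q, k1, k2, k3, k4, k5⟩ := h'
  refine ⟨fun a c => ∃ b, R a b ∧ Q b c, ?_, ?_, ?_, ?_, ?_⟩
  · rintro v v' ⟨b, hb, hb'⟩
    exact ⟨(h1 _ _ hb).1, (k1 _ _ hb').2.1, knuth_trans (h1 _ _ hb).2.2 (k1 _ _ hb').2.2⟩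
  · intro v hv
    obtain ⟨b, hb⟩ := h2 v hv
    obtain ⟨c, hc⟩ := k2 b (h1 _ _ hb).2.1
    exact ⟨c, b, hb, hc⟩
  · intro v hv
    obtain ⟨b, hb⟩ := k3 v hv
    obtain ⟨c, hc⟩ := h3 b (k1 _ _ hb).1
    exact ⟨c, b, hc, hb⟩
  · rintro v a b ⟨x, hx, hx'⟩ ⟨y, hy, hy'⟩
    obtain rfl := h4 _ _ _ hx hy
    exact k4 _ _ _ hx' hy'
  · rintro v a b ⟨x, hx, hx'⟩ ⟨y, hy, hy'⟩
    obtain rfl := k5 _ _ _ hx' hy'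
    exact h5 _ _ _ hx hy

theorem WEq.nonempty {n : ℕ} {α Φ α' Φ' : ℕ → ℕ} (h : WEq n α Φ α' Φ')
    (hne : ∃ v, Good n α Φ v) : ∃ v, Good n α' Φ' v := by
  obtain ⟨R, h1, h2, -⟩ := h
  obtain ⟨v, hv⟩ := hne
  obtain ⟨v', hv'⟩ := h2 v hv
  exact ⟨v', (h1 _ _ hv').2.1⟩

/-- swap entries `i`, `i+1`. -/
def sw (i : ℕ) (α : ℕ → ℕ) : ℕ → ℕ := fun j => α (Equiv.swap i (i + 1) j)

theorem sw_left (i : ℕ) (α : ℕ → ℕ) : sw i α i = α (i + 1) := by simp [sw]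

theorem sw_right (i : ℕ) (α : ℕ → ℕ) : sw i α (i + 1) = α i := by simp [sw]

theorem sw_ne (i : ℕ) (α : ℕ → ℕ) (j : ℕ) (h1 : j ≠ i) (h2 : j ≠ i + 1) : sw i α j = α j := by
  simp [sw, Equiv.swap_apply_of_ne_of_ne h1 h2]

theorem sw_sw (i : ℕ) (α : ℕ → ℕ) : sw i (sw i α) = α := by
  funext j
  simp [sw]

theorem swap_lt (n i j : ℕ) (hi : i + 1 < n) (hj : j < n) : Equiv.swap i (i + 1) j < n := by
  by_cases h1 : j = i
  · subst h1; simpa using hi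
  · by_cases h2 : j = i + 1
    · subst h2; simp; omega
    · rw [Equiv.swap_apply_of_ne_of_ne h1 h2]; exact hj

theorem dsort_sw (n i : ℕ) (α : ℕ → ℕ) (hi : i + 1 < n) (r : ℕ) :
    dsort n (sw i α) r = dsort n α r := by
  apply dsort_congr
  intro m
  unfold cge
  apply Finset.card_bij (fun k _ => Equiv.swap i (i + 1) k)
  · intro k hk
    rw [Finset.mem_filter, Finset.mem_range] at *
    exact ⟨swap_lt n i k hi hk.1, hk.2⟩
  · intro a _ b _ h
    exact (Equiv.swap i (i + 1)).injective h
  · intro k hk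
    refine ⟨Equiv.swap i (i + 1) k, ?_, by simp⟩
    rw [Finset.mem_filter, Finset.mem_range] at *
    refine ⟨swap_lt n i k hi hk.1, ?_⟩
    simpa [sw] using hk.2

theorem word_knuth (n i : ℕ) (v v' : ℕ → List ℕ) (hi : i + 1 < n)
    (hag : ∀ j, j ≠ i → j ≠ i + 1 → v j = v' j)
    (hk : KnuthEquiv (v (i + 1) ++ v i) (v' (i + 1) ++ v' i)) :
    KnuthEquiv (wordOfFactors n v) (wordOfFactors n v') := by
  rw [wof_eq, wof_eq]
  induction n with
  | zero => omega
  | succ n ih =>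
    rw [wofG_succ, wofG_succ]
    by_cases h : n = i + 1
    · subst h
      rw [wofG_succ, wofG_succ, wofG_congr i v v' (fun j hj => hag j (by omega) (by omega)),
        ← List.append_assoc, ← List.append_assoc]
      exact knuth_right _ hk
    · rw [hag n (by omega) h]
      exact knuth_left _ (ih (by omega))

theorem good_transfer (n i : ℕ) (α Φ : ℕ → ℕ) (v v' : ℕ → List ℕ) (hi : i + 1 < n)
    (hΦ : Φ i = Φ (i + 1)) (hg : Good n α Φ v)
    (hag : ∀ j, j ≠ i → j ≠ i + 1 → v j = v' j)
    (hk : KnuthEquiv (v (i + 1) ++ v i) (v' (i + 1) ++ v' i))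
    (hp : (v (i + 1) ++ v i).Perm (v' (i + 1) ++ v' i))
    (hl1 : (v' i).length = α (i + 1)) (hl2 : (v' (i + 1)).length = α i)
    (hs1 : (v' i).Pairwise (· ≤ ·)) (hs2 : (v' (i + 1)).Pairwise (· ≤ ·)) :
    Good n (sw i α) Φ v' := by
  obtain ⟨g1, g2, g3, g4, g5, g6⟩ := hg
  have hlet : ∀ x ∈ v' (i + 1) ++ v' i, 1 ≤ x ∧ x ≤ Φ i := by
    intro x hx
    rw [← hp.mem_iff, List.mem_append] at hx
    rcases hx with hx | hx
    · rw [hΦ]; exact g4 _ x hx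
    · exact g4 _ x hx
  have hw := word_knuth n i v v' hi hag hk
  refine ⟨?_, ?_, ?_, ?_, ?_, ?_⟩
  · intro j hj
    rw [← hag j (by omega) (by omega)]
    exact g1 j hj
  · intro j
    by_cases h1 : j = i
    · subst h1; rw [sw_left, hl1]
    · by_cases h2 : j = i + 1
      · subst h2; rw [sw_right, hl2]
      · rw [sw_ne i α j h1 h2, ← hag j h1 h2]; exact g2 j
  · intro j
    by_cases h1 : j = i
    · subst h1; exact hs1
    · by_cases h2 : j = i + 1
      · subst h2; exact hs2
      · rw [← hag j h1 h2]; exact g3 j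
  · intro j x hx
    by_cases h1 : j = i
    · subst h1; exact hlet x (List.mem_append_right _ hx)
    · by_cases h2 : j = i + 1
      · subst h2; rw [← hΦ]; exact hlet x (List.mem_append_left _ hx)
      · rw [← hag j h1 h2] at hx; exact g4 j x hx
  · intro S m hI
    simp only [dsort_sw n i α hi]
    exact g5 S m ((inc_knuth hw).2 hI)
  · intro k
    simp only [dsort_sw n i α hi]
    exact (inc_knuth hw).1 (g6 k)

/-- replace rows `i`, `i+1`. -/
def repl (i : ℕ) (v : ℕ → List ℕ) (a b : List ℕ) : ℕ → List ℕ :=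
  fun j => if j = i then a else if j = i + 1 then b else v j

theorem repl_left (i : ℕ) (v : ℕ → List ℕ) (a b : List ℕ) : repl i v a b i = a := by simp [repl]

theorem repl_right (i : ℕ) (v : ℕ → List ℕ) (a b : List ℕ) : repl i v a b (i + 1) = b := by
  simp [repl]

theorem repl_ne (i : ℕ) (v : ℕ → List ℕ) (a b : List ℕ) (j : ℕ) (h1 : j ≠ i) (h2 : j ≠ i + 1) :
    repl i v a b j = v j := by simp [repl, h1, h2]

theorem weq_swap (n i : ℕ) (α Φ : ℕ → ℕ) (hi : i + 1 < n) (hΦ : Φ i = Φ (i + 1))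
    (hα : α i ≤ α (i + 1)) : WEq n α Φ (sw i α) Φ := by
  refine ⟨fun v v' => Good n α Φ v ∧ Good n (sw i α) Φ v' ∧
    (∀ j, j ≠ i → j ≠ i + 1 → v j = v' j) ∧ Sw (v (i + 1)) (v i) (v' (i + 1)) (v' i),
    ?_, ?_, ?_, ?_, ?_⟩
  · rintro v v' ⟨h1, h2, h3, h4⟩
    exact ⟨h1, h2, word_knuth n i v v' hi h3 h4.knuth⟩
  · intro v hv
    have hl := hv.2.1 i
    have hl' := hv.2.1 (i + 1)
    obtain ⟨ys, r', hsw⟩ := Sw.exists_right (v i) (v (i + 1)) (α (i + 1) - α i) (hv.2.2.1 _)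
      (by omega) (fun j hj => domin_ge n α v hv.2.1 hv.2.2.1 hv.2.2.2.2.1 (i + 1) i j (by omega) hi
        hα (by omega))
    have hso := hsw.sorted_right (hv.2.2.1 _) (hv.2.2.1 _)
    have hlen := hsw.length
    refine ⟨repl i v r' ys, hv, ?_, ?_, ?_⟩
    · apply good_transfer n i α Φ v _ hi hΦ hv
      · intro j h1 h2; rw [repl_ne i v r' ys j h1 h2]
      · rw [repl_left, repl_right]; exact hsw.knuth
      · rw [repl_left, repl_right]; exact hsw.perm
      · rw [repl_left]; omega
      · rw [repl_right]; omega
      · rw [repl_left]; exact hso.2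
      · rw [repl_right]; exact hso.1
    · intro j h1 h2; rw [repl_ne i v r' ys j h1 h2]
    · rw [repl_left, repl_right]; exact hsw
  · intro v' hv'
    have hl := hv'.2.1 i
    have hl' := hv'.2.1 (i + 1)
    rw [sw_left] at hl
    rw [sw_right] at hl'
    obtain ⟨r, xs, hsw⟩ := Sw.exists_left (v' (i + 1)) (v' i) (hv'.2.2.1 _) (by omega)
      (fun j hj => domin_le n (sw i α) v' hv'.2.1 hv'.2.2.1 hv'.2.2.2.2.1 (i + 1) i j (by omega) hi
        (by rw [sw_left, sw_right]; exact hα) (by rw [sw_right]; omega))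
    have hso := hsw.sorted_left (hv'.2.2.1 _) (hv'.2.2.1 _)
    have hlen := hsw.length
    refine ⟨repl i v' xs r, ?_, hv', ?_, ?_⟩
    · have := good_transfer n i (sw i α) Φ v' (repl i v' xs r) hi hΦ hv'
        (fun j h1 h2 => by rw [repl_ne i v' xs r j h1 h2])
        (by rw [repl_left, repl_right]; exact knuth_symm hsw.knuth)
        (by rw [repl_left, repl_right]; exact hsw.perm.symm)
        (by rw [repl_left, sw_right]; omega)
        (by rw [repl_right, sw_left]; omega)
        (by rw [repl_left]; exact hso.1)
        (by rw [repl_right]; exact hso.2)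
      rwa [sw_sw] at this
    · intro j h1 h2; rw [repl_ne i v' xs r j h1 h2]
    · rw [repl_left, repl_right]; exact hsw
  · rintro v a b ⟨_, _, ha, hsa⟩ ⟨_, _, hb, hsb⟩
    obtain ⟨e1, e2⟩ := hsa.unique_right hsb
    funext j
    by_cases h1 : j = i
    · subst h1; exact e2
    · by_cases h2 : j = i + 1
      · subst h2; exact e1
      · rw [← ha j h1 h2, ← hb j h1 h2]
  · rintro v a b ⟨_, _, ha, hsa⟩ ⟨_, _, hb, hsb⟩
    obtain ⟨e1, e2⟩ := hsa.unique_left hsb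
    funext j
    by_cases h1 : j = i
    · subst h1; exact e1
    · by_cases h2 : j = i + 1
      · subst h2; exact e2
      · rw [ha j h1 h2, hb j h1 h2]

theorem good_congr (n : ℕ) (α Φ Φ' : ℕ → ℕ) (h : ∀ i, α i ≠ 0 → Φ i = Φ' i) (v : ℕ → List ℕ) :
    Good n α Φ v ↔ Good n α Φ' v := by
  have key : ∀ Φ Φ' : ℕ → ℕ, (∀ i, α i ≠ 0 → Φ i = Φ' i) → Good n α Φ v → Good n α Φ' v := by
    rintro Φ Φ' h ⟨g1, g2, g3, g4, g5⟩
    refine ⟨g1, g2, g3, ?_, g5⟩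
    intro i x hx
    have := List.length_pos_of_mem hx
    rw [← h i (by rw [← g2 i]; omega)]
    exact g4 i x hx
  exact ⟨key _ _ h, key _ _ (fun i hi => (h i hi).symm)⟩

theorem good_lower (n i : ℕ) (α Φ : ℕ → ℕ) (hi : i + 1 < n) (hΦ : Φ i = Φ (i + 1))
    (hα : α i ≤ α (i + 1)) (v : ℕ → List ℕ) :
    Good n α Φ v ↔ Good n α (fun j => if j = i then Φ i - 1 else Φ j) v := by
  constructor
  · rintro ⟨g1, g2, g3, g4, g5⟩
    refine ⟨g1, g2, g3, ?_, g5⟩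
    intro j x hx
    beta_reduce
    split_ifs with h
    · subst h
      refine ⟨(g4 j x hx).1, ?_⟩
      rw [List.mem_iff_getElem] at hx
      obtain ⟨p, hp, rfl⟩ := hx
      have l1 := g2 j
      have l2 := g2 (j + 1)
      have hd := domin_ge n α v g2 g3 g5.1 (j + 1) j p (by omega) hi hα (by omega)
      rw [getD_eq_getElem' _ _ (by omega), getD_eq_getElem' _ _ (by omega)] at hd
      have := (g4 (j + 1) _ (List.getElem_mem (l := v (j + 1)) (n := α (j + 1) - α j + p) (by omega))).2
      omega
    · exact g4 j x hx
  · rintro ⟨g1, g2, g3, g4, g5⟩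
    refine ⟨g1, g2, g3, ?_, g5⟩
    intro j x hx
    have := g4 j x hx
    beta_reduce at this
    split_ifs at this with h
    · subst h; omega
    · exact this


def Concl (n : ℕ) (α Φ : ℕ → ℕ) : Prop :=
  ∃ αh : ℕ → ℕ, (∀ i, n ≤ i → αh i = 0) ∧ (∀ i, dsort n αh i = dsort n α i) ∧
    WEq n α Φ αh (fun i => i + 1)

theorem Concl.of_weq {n : ℕ} {α Φ α' Φ' : ℕ → ℕ} (h : WEq n α Φ α' Φ')
    (hd : ∀ i, dsort n α' i = dsort n α i) (hc : Concl n α' Φ') : Concl n α Φ := by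
  obtain ⟨αh, h1, h2, h3⟩ := hc
  exact ⟨αh, h1, fun i => (h2 i).trans (hd i), h.trans h3⟩

theorem sw_zero (n i : ℕ) (α : ℕ → ℕ) (hi : i + 1 < n) (hz : ∀ j, n ≤ j → α j = 0) (j : ℕ)
    (hj : n ≤ j) : sw i α j = 0 := by
  rw [sw_ne i α j (by omega) (by omega)]
  exact hz j hj

theorem phase2 (n : ℕ) : ∀ (N : ℕ) (α Φ : ℕ → ℕ), ∑ j ∈ Finset.range n, Φ j = N →
    (∀ i, n ≤ i → α i = 0) → (∀ i, i + 1 < n → Φ i ≤ Φ (i + 1)) →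
    (∀ i, i < n → i + 1 ≤ Φ i ∧ Φ i ≤ n) → Concl n α Φ := by
  intro N
  induction N using Nat.strong_induction_on with
  | _ N ih =>
    intro α Φ hN hz hm hb
    by_cases hex : ∃ i, i + 1 < n ∧ Φ i = Φ (i + 1)
    · obtain ⟨i, ⟨hi, hΦ⟩, hmin⟩ : ∃ i, (i + 1 < n ∧ Φ i = Φ (i + 1)) ∧
          ∀ j < i, ¬ (j + 1 < n ∧ Φ j = Φ (j + 1)) :=
        ⟨Nat.find hex, Nat.find_spec hex, fun j hj => Nat.find_min hex hj⟩
      obtain ⟨α1, ha, hz1, hd1, hw1⟩ : ∃ α1 : ℕ → ℕ, α1 i ≤ α1 (i + 1) ∧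
          (∀ j, n ≤ j → α1 j = 0) ∧ (∀ j, dsort n α1 j = dsort n α j) ∧ WEq n α Φ α1 Φ := by
        rcases le_total (α i) (α (i + 1)) with h | h
        · exact ⟨α, h, hz, fun _ => rfl, WEq.of_iff (fun _ => Iff.rfl)⟩
        · refine ⟨sw i α, by rw [sw_left, sw_right]; exact h, sw_zero n i α hi hz,
            dsort_sw n i α hi, ?_⟩
          have := weq_swap n i (sw i α) Φ hi hΦ (by rw [sw_left, sw_right]; exact h)
          rw [sw_sw] at this
          exact this.symm
      refine Concl.of_weq (hw1.trans (WEq.of_iff (good_lower n i α1 Φ hi hΦ ha))) hd1 ?_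
      have hbi := hb i (by omega)
      have hbi' := hb (i + 1) hi
      refine ih _ ?_ α1 _ rfl hz1 ?_ ?_
      · rw [← hN]
        apply Finset.sum_lt_sum
        · intro j _
          split_ifs with h
          · subst h; omega
          · exact le_rfl
        · refine ⟨i, Finset.mem_range.2 (by omega), ?_⟩
          rw [if_pos rfl]; omega
      · intro j hj
        have h1 := hm j hj
        by_cases h2 : j = i
        · subst h2
          rw [if_pos rfl, if_neg (by omega)]; omega
        · by_cases h3 : j + 1 = i
          · have h4 := hmin j (by omega)
            rw [if_neg h2, if_pos h3]
            rw [h3] at h1 h4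
            have : Φ j ≠ Φ i := fun h => h4 ⟨by omega, h⟩
            omega
          · rw [if_neg h2, if_neg h3]; exact h1
      · intro j hj
        have h1 := hb j hj
        split_ifs with h
        · subst h; omega
        · exact h1
    · have hstrict : ∀ i, i + 1 < n → Φ i < Φ (i + 1) := by
        intro i hi
        have h1 := hm i hi
        have h2 : Φ i ≠ Φ (i + 1) := fun h => hex ⟨i, hi, h⟩
        omega
      have hadd : ∀ d i, i + d < n → Φ i + d ≤ Φ (i + d) := by
        intro d
        induction d with
        | zero => intro i _; exact le_rfl
        | succ d ihd =>
          intro i hi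
          have h1 := ihd i (by omega)
          have h2 := hstrict (i + d) (by omega)
          have e : i + (d + 1) = i + d + 1 := by omega
          rw [e]
          omega
      have heq : ∀ i, i < n → Φ i = i + 1 := by
        intro i hi
        have h1 := hadd (n - 1 - i) i (by omega)
        have h2 := hb (i + (n - 1 - i)) (by omega)
        have h3 := hb i hi
        omega
      refine ⟨α, hz, fun _ => rfl, WEq.of_iff (good_congr n α _ _ ?_)⟩
      intro i hi
      apply heq
      by_contra hcon
      exact hi (hz i (by omega))

theorem phase1 (n : ℕ) : ∀ (N : ℕ) (α Φ : ℕ → ℕ),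
    ∑ j ∈ Finset.range n, (if α j = 0 then 0 else j) = N →
    (∀ i, n ≤ i → α i = 0) → (∀ i, i + 1 < n → Φ i ≤ Φ (i + 1)) →
    (∀ i, i < n → Φ i ≤ n) → (∃ v, Good n α Φ v) → Concl n α Φ := by
  intro N
  induction N using Nat.strong_induction_on with
  | _ N ih =>
    intro α Φ hN hz hm hb hne
    by_cases hex : ∃ i, i + 1 < n ∧ α i = 0 ∧ α (i + 1) ≠ 0
    · obtain ⟨i, hi, h0, h1⟩ := hex
      set Φ' : ℕ → ℕ := fun j => if j = i then Φ (i + 1) else Φ j with hΦ'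
      have e1 : Φ' i = Φ (i + 1) := by simp [hΦ']
      have e2 : ∀ j, j ≠ i → Φ' j = Φ j := fun j hj => by simp [hΦ', hj]
      have w1 : WEq n α Φ α Φ' := by
        apply WEq.of_iff
        apply good_congr
        intro j hj
        rw [e2 j]
        rintro rfl
        exact hj h0
      have w2 : WEq n α Φ (sw i α) Φ' :=
        w1.trans (weq_swap n i α Φ' hi (by rw [e1, e2 _ (by omega)]) (by omega))
      refine Concl.of_weq w2 (dsort_sw n i α hi) ?_
      refine ih _ ?_ (sw i α) Φ' rfl (sw_zero n i α hi hz) ?_ ?_ (w2.nonempty hne)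
      · rw [← hN]
        have hmi : i ∈ Finset.range n := Finset.mem_range.2 (by omega)
        have hmi' : i + 1 ∈ (Finset.range n).erase i := by
          rw [Finset.mem_erase, Finset.mem_range]; omega
        rw [← Finset.add_sum_erase _ _ hmi, ← Finset.add_sum_erase _ _ hmi',
          ← Finset.add_sum_erase _ (fun j => if α j = 0 then 0 else j) hmi,
          ← Finset.add_sum_erase _ (fun j => if α j = 0 then 0 else j) hmi']
        have hrest : ∑ x ∈ ((Finset.range n).erase i).erase (i + 1),
            (if sw i α x = 0 then 0 else x) =
            ∑ x ∈ ((Finset.range n).erase i).erase (i + 1), (if α x = 0 then 0 else x) := by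
          apply Finset.sum_congr rfl
          intro j hj
          rw [Finset.mem_erase, Finset.mem_erase] at hj
          rw [sw_ne i α j hj.2.1 hj.1]
        rw [hrest]
        simp only [sw_left, sw_right, h0, h1, if_true, if_false]
        omega
      · intro j hj
        have h2 := hm j hj
        by_cases h3 : j = i
        · subst h3; rw [e1, e2 _ (by omega)]
        · rw [e2 j h3]
          by_cases h4 : j + 1 = i
          · rw [h4, e1]
            rw [h4] at h2
            exact h2.trans (hm i hi)
          · rw [e2 _ h4]; exact h2
      · intro j hj
        by_cases h3 : j = i
        · subst h3; rw [e1]; exact hb _ hi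
        · rw [e2 j h3]; exact hb j hj
    · have hend : ∀ i, i + 1 < n → α i = 0 → α (i + 1) = 0 := by
        intro i hi h0
        by_contra h
        exact hex ⟨i, hi, h0, h⟩
      have hend2 : ∀ d i, i + d < n → α i = 0 → α (i + d) = 0 := by
        intro d
        induction d with
        | zero => intro i _ h; exact h
        | succ d ihd =>
          intro i hi h
          exact hend (i + d) (by omega) (ihd i (by omega) h)
      have hmono : ∀ d i, i + d < n → Φ i ≤ Φ (i + d) := by
        intro d
        induction d with
        | zero => intro i _; exact le_rfl
        | succ d ihd =>
          intro i hi
          exact (ihd i (by omega)).trans (hm (i + d) (by omega))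
      set Φ' : ℕ → ℕ := fun j => if α j = 0 then n else Φ j with hΦ'
      have w1 : WEq n α Φ α Φ' := by
        apply WEq.of_iff
        apply good_congr
        intro j hj
        simp [hΦ', hj]
      refine Concl.of_weq w1 (fun _ => rfl) ?_
      apply phase2 n _ α Φ' rfl hz
      · intro i hi
        by_cases h0 : α i = 0
        · simp [hΦ', h0, hend i hi h0]
        · by_cases h1 : α (i + 1) = 0
          · simp only [hΦ', h0, h1, if_true, if_false]; exact hb i (by omega)
          · simp only [hΦ', h0, h1, if_false]; exact hm i hi
      · intro i hi
        by_cases h0 : α i = 0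
        · simp only [hΦ', h0, if_true]; omega
        · simp only [hΦ', h0, if_false]
          refine ⟨?_, hb i hi⟩
          obtain ⟨v, g1, g2, g3, g4, g5⟩ := hne
          have hc := nonzero_le n α v g2 g3 g5.1 i (Φ i) hi ?_
          · rw [Finset.filter_true_of_mem, Finset.card_range] at hc
            · exact hc
            · intro j hj
              rw [Finset.mem_range] at hj
              intro hj0
              have := hend2 (i - j) j (by omega) hj0
              rw [show j + (i - j) = i by omega] at this
              exact h0 this
          · intro j hj x hx
            have := g4 j x hx
            have h2 := hmono (i - j) j (by omega)
            rw [show j + (i - j) = i by omega] at h2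
            omega

theorem main_aux (n : ℕ) (B : BurgeData)
    (β : ℕ → ℕ) (hβ : ∀ i, n ≤ i → β i = 0)
    (Φ : ℕ → ℕ) (hΦ : IsFlag n Φ) :
    WSet n B β Φ = ∅ ∨
    ∃ βh : ℕ → ℕ, (∀ i, n ≤ i → βh i = 0) ∧
      (∀ i, dsort n βh i = dsort n β i) ∧
      ∃ ζ : (ℕ → List ℕ) → (ℕ → List ℕ),
        Set.BijOn ζ (WSet n B β Φ) (WSet n B βh (fun i => i + 1)) ∧
        ∀ v ∈ WSet n B β Φ, KnuthEquiv (wordOfFactors n v) (wordOfFactors n (ζ v)) := by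
  rcases Set.eq_empty_or_nonempty (WSet n B β Φ) with h | ⟨v0, hv0⟩
  · exact Or.inl h
  · right
    obtain ⟨βh, h1, h2, R, r1, r2, r3, r4, r5⟩ := phase1 n _ β Φ rfl hβ
      (fun i hi => hΦ.1 i (i + 1) (by omega) hi)
      (fun i hi => by
        have := hΦ.1 i (n - 1) (by omega) (by omega)
        rw [hΦ.2.2] at this
        exact this)
      ⟨v0, (mem_WSet n B β Φ v0).1 hv0⟩
    refine ⟨βh, h1, h2, ?_⟩
    have hex : ∀ v, ∃ v', Good n β Φ v → R v v' := by
      intro v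
      by_cases hv : Good n β Φ v
      · obtain ⟨v', h⟩ := r2 v hv
        exact ⟨v', fun _ => h⟩
      · exact ⟨v, fun h => absurd h hv⟩
    choose ζ hζ using hex
    refine ⟨ζ, ⟨?_, ?_, ?_⟩, ?_⟩
    · intro v hv
      rw [mem_WSet] at hv ⊢
      exact (r1 _ _ (hζ v hv)).2.1
    · intro v hv w hw he
      rw [mem_WSet] at hv hw
      have a := hζ v hv
      rw [he] at a
      exact r5 _ _ _ a (hζ w hw)
    · intro v' hv'
      rw [mem_WSet] at hv'
      obtain ⟨v, hv⟩ := r3 v' hv'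
      refine ⟨v, (mem_WSet n B β Φ v).2 (r1 _ _ hv).1, ?_⟩
      exact r4 _ _ _ (hζ v (r1 _ _ hv).1) hv
    · intro v hv
      rw [mem_WSet] at hv
      exact (r1 _ _ (hζ v hv)).2.2

end FlagCompression

/-- (Reiner–Shimozono flag compression.) For every `β ∈ ℤ₊ⁿ` and
every flag `Φ`, either `𝒲(β, Φ)` is empty, or there exist `β̂` with the same
decreasing rearrangement as `β` and a bijection `ζ : 𝒲(β, Φ) → 𝒲(β̂, Φ₀)` onto the
`𝒲`-set for the standard flag `Φ₀ = (1, 2, …, n)` such that every `u ∈ 𝒲(β, Φ)` is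
Knuth equivalent to `ζ(u)`. -/
theorem reiner_shimozono_flag_compression
    (n : ℕ) (B : BurgeData)
    (β : ℕ → ℕ) (hβ : ∀ i, n ≤ i → β i = 0)
    (Φ : ℕ → ℕ) (hΦ : IsFlag n Φ) :
    WSet n B β Φ = ∅ ∨
    ∃ βh : ℕ → ℕ, (∀ i, n ≤ i → βh i = 0) ∧
      (∀ i, dsort n βh i = dsort n β i) ∧
      ∃ ζ : (ℕ → List ℕ) → (ℕ → List ℕ),
        Set.BijOn ζ (WSet n B β Φ) (WSet n B βh (fun i => i + 1)) ∧
        ∀ v ∈ WSet n B β Φ, KnuthEquiv (wordOfFactors n v) (wordOfFactors n (ζ v)) := by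
  exact main_aux n B β hβ Φ hΦ

end SkewG
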